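/- Let G be a finite group, V a finite dimensional kG-module, and S = T_k(V)/(R) a Koszul algebra with R ⊆ V⊗V closed under the action of G. A filtered algebra H is a PBW deformation of the skew group algebra S⋊G if and only if H ≅ H_{λ,α,β} for some k-linear parameter functions α: R → V⊗kG, β: R → kG, λ: kG⊗V → kG satisfying, upon projection of the images of the maps to S⋊G: (1) 1⊗λ − λ∘(m⊗1) + (λ⊗1)∘(1⊗σ) = 0 as maps on kG⊗kG⊗V; (2) λ∘(λ⊗1) − λ∘(1⊗α) = (1⊗β) − (β⊗1)∘(1⊗σ)∘(σ⊗1) as maps on kG⊗R; (3) (1⊗α) − (α⊗1)∘(1⊗σ)∘(σ⊗1) = λ⊗1 + (1⊗λ)∘(σ⊗1) as maps on kG⊗R; (4) α∘((1⊗σ)∘(α⊗1) − 1⊗α) + Σ_{g∈G} α_g ⊗ λ(g⊗−) = 1⊗β − β⊗1 on (V⊗R)∩(R⊗V); (5) β∘((1⊗σ)∘(α⊗1) − 1⊗α) = −λ∘(β⊗1) on (V⊗R)∩(R⊗V); (6) α⊗1 − 1⊗α = 0 on (V⊗R)∩(R⊗V) ⊆ V⊗V⊗V; moreover condition (6) implies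 that the maps in (4) and (5) are defined on (V⊗R)∩(R⊗V). -/

import Mathlib

open TensorProduct

noncomputable section

namespace DeformKoszul

variable (k G V : Type) [Field k] [Group G] [AddCommGroup V] [Module k V]

/-! ### Koszulity (Backelin's distributivity criterion) -/

/-- `Vpow n = V^{⊗(n+1)}`. -/
def Vpow : ℕ → ModuleCat k
  | 0 => ModuleCat.of k V
  | n+1 => ModuleCat.of k (V ⊗[k] (Vpow n))

variable (R : Submodule k (V ⊗[k] V))

/-- `Wsub m i` is the subspace `V^{⊗i} ⊗ R ⊗ V^{⊗(m-1-i)}` of `V^{⊗(m+1)}`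
(junk value `⊥` for `i > m-1`). -/
def Wsub : (m : ℕ) → ℕ → Submodule k (Vpow k V m)
  | 0, _ => ⊥
  | 1, 0 => R
  | 1, _+1 => ⊥
  | m+2, 0 =>
      Submodule.map (TensorProduct.assoc k V V (Vpow k V m)).toLinearMap
        (LinearMap.range (TensorProduct.map R.subtype (LinearMap.id (M := Vpow k V m))))
  | m+1, i+1 =>
      LinearMap.range (TensorProduct.map (LinearMap.id (M := V)) (Wsub m i).subtype)

/-- The quadratic algebra `S = T(V)/(R)` is **Koszul**.  We use Backelin's criterion:
`S` is Koszul iff for each `n` the subspaces `V^{⊗i} ⊗ R ⊗ V^{⊗j}` of `V^{⊗n}`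
generate a distributive lattice; for finite collections of subspaces of a vector space
distributivity is equivalent to the existence of a basis of `V^{⊗n}` from which each of
the subspaces can be spanned. -/
def IsKoszul : Prop :=
  ∀ m : ℕ, ∃ (ι : Type) (b : Module.Basis ι k (Vpow k V m)),
    ∀ i : ℕ, ∃ J : Set ι, Wsub k V R m i = Submodule.span k (⇑b '' J)

/-! ### The deformed algebra `H_{λ,α,β}` -/

/-- The free `k`-algebra on the vector space `kG ⊕ V`. -/
abbrev FreeAlg := TensorAlgebra k (MonoidAlgebra k G × V)

/-- The canonical embedding of the group algebra `kG` into the free algebra. -/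
def gIn : MonoidAlgebra k G →ₗ[k] FreeAlg k G V :=
  (TensorAlgebra.ι k).comp (LinearMap.inl k (MonoidAlgebra k G) V)

/-- The canonical embedding of `V` into the free algebra. -/
def vIn : V →ₗ[k] FreeAlg k G V :=
  (TensorAlgebra.ι k).comp (LinearMap.inr k (MonoidAlgebra k G) V)

/-- `V ⊗ V → FreeAlg`, `v ⊗ w ↦ v·w`. -/
def mulVV : V ⊗[k] V →ₗ[k] FreeAlg k G V :=
  (LinearMap.mul' k _).comp (TensorProduct.map (vIn k G V) (vIn k G V))

/-- `V ⊗ kG → FreeAlg`, `v ⊗ x ↦ v·x`. -/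
def embVG : V ⊗[k] MonoidAlgebra k G →ₗ[k] FreeAlg k G V :=
  (LinearMap.mul' k _).comp (TensorProduct.map (vIn k G V) (gIn k G V))

variable (ρ : Representation k G V)

/-- The defining relations of `H_{λ,α,β}` over the generating space `kG ⊕ V`:
`kG` is a subalgebra (with the same unit), the group-action relations
`g·v = (ᵍv)·g + λ(g ⊗ v)` deforming `R'` by `λ`, and the quadratic Koszul relations
`r = α(r) + β(r)` for `r ∈ R`. -/
inductive GRel (lam : MonoidAlgebra k G ⊗[k] V →ₗ[k] MonoidAlgebra k G)
    (α : R →ₗ[k] (V ⊗[k] MonoidAlgebra k G))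
    (β : R →ₗ[k] MonoidAlgebra k G) :
    FreeAlg k G V → FreeAlg k G V → Prop
  | unit : GRel lam α β (gIn k G V 1) 1
  | gmul (x y : MonoidAlgebra k G) :
      GRel lam α β (gIn k G V x * gIn k G V y) (gIn k G V (x * y))
  | act (g : G) (v : V) :
      GRel lam α β (gIn k G V (MonoidAlgebra.of k G g) * vIn k G V v)
        (vIn k G V (ρ g v) * gIn k G V (MonoidAlgebra.of k G g)
          + gIn k G V (lam (MonoidAlgebra.of k G g ⊗ₜ[k] v)))
  | quad (r : R) :
      GRel lam α β (mulVV k G V (r : V ⊗[k] V))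
        (embVG k G V (α r) + gIn k G V (β r))

variable (lam : MonoidAlgebra k G ⊗[k] V →ₗ[k] MonoidAlgebra k G)
    (α : R →ₗ[k] (V ⊗[k] MonoidAlgebra k G))
    (β : R →ₗ[k] MonoidAlgebra k G)

/-- The algebra `H_{λ,α,β}`.  For `lam = 0`, `α = 0`, `β = 0` this is (the presentation
of) the skew group algebra `S ⋊ G`, where `S = T(V)/(R)`. -/
abbrev HAlg := RingQuot (GRel k G V R ρ lam α β)

/-- The quotient map onto `H_{λ,α,β}`. -/
def toH : FreeAlg k G V →ₐ[k] HAlg k G V R ρ lam α β :=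
  RingQuot.mkAlgHom k (GRel k G V R ρ lam α β)

/-- Degree-`n` part of the free algebra: `kG` has degree 0 and `V` degree 1. -/
def grT : ℕ → Submodule k (FreeAlg k G V)
  | 0 => Subalgebra.toSubmodule (Algebra.adjoin k (Set.range (gIn k G V)))
  | n+1 => grT n * (LinearMap.range (vIn k G V) * grT 0)

/-- Filtration of the free algebra, `kG` in degree 0 and `V` in degree 1. -/
def filtT : ℕ → Submodule k (FreeAlg k G V)
  | 0 => grT k G V 0
  | n+1 => filtT n ⊔ grT k G V (n+1)

/-- The induced filtration on `H_{λ,α,β}`. -/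
def filtH (d : ℕ) : Submodule k (HAlg k G V R ρ lam α β) :=
  (filtT k G V d).map (toH k G V R ρ lam α β).toLinearMap

/-- `H_{λ,α,β}` is a **PBW deformation** of `S ⋊ G`:  the associated graded algebra is
`S ⋊ G`, equivalently (all filtered pieces being finite dimensional) each filtered
piece has the same dimension as the corresponding one of `S ⋊ G = H_{0,0,0}`. -/
def IsPBW : Prop :=
  ∀ d, Module.finrank k (filtH k G V R ρ lam α β d)
    = Module.finrank k (filtH k G V R ρ 0 0 0 d)

/-! ### The skew group algebra and auxiliary maps -/

/-- The skew group algebra `S ⋊ G`, presented as `H_{0,0,0}`. -/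
abbrev SkewA := HAlg k G V R ρ 0 0 0

/-- The image of `kG` in `S ⋊ G`. -/
def gA : MonoidAlgebra k G →ₗ[k] SkewA k G V R ρ :=
  (toH k G V R ρ 0 0 0).toLinearMap.comp (gIn k G V)

/-- The image of `V` in `S ⋊ G`. -/
def vA : V →ₗ[k] SkewA k G V R ρ :=
  (toH k G V R ρ 0 0 0).toLinearMap.comp (vIn k G V)

/-- `g`, as an element of the group algebra. -/
def ofg (g : G) : MonoidAlgebra k G := MonoidAlgebra.of k G g

/-- The twist map `σ : kG ⊗ V → V ⊗ kG`, `g ⊗ v ↦ ᵍv ⊗ g`. -/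
def sigma : MonoidAlgebra k G ⊗[k] V →ₗ[k] V ⊗[k] MonoidAlgebra k G :=
  TensorProduct.lift
    (((Finsupp.lift (V →ₗ[k] (V ⊗[k] MonoidAlgebra k G)) k G
      (fun g => ((TensorProduct.mk k V (MonoidAlgebra k G)).flip (MonoidAlgebra.of k G g)).comp
        (ρ g))).comp (MonoidAlgebra.coeffLinearEquiv k).toLinearMap :
      MonoidAlgebra k G →ₗ[k] (V →ₗ[k] (V ⊗[k] MonoidAlgebra k G))))

/-- `λ(g ⊗ -) : V → kG` for fixed `g`. -/
def lamMk (g : G) : V →ₗ[k] MonoidAlgebra k G :=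
  lam.comp ((TensorProduct.mk k (MonoidAlgebra k G) V) (MonoidAlgebra.of k G g))

variable (hR : ∀ (g : G) (x : V ⊗[k] V), x ∈ R → TensorProduct.map (ρ g) (ρ g) x ∈ R)

/-- The diagonal action of `g` on `R ⊆ V ⊗ V`. -/
def rActR (g : G) : R →ₗ[k] R :=
  (TensorProduct.map (ρ g) (ρ g)).restrict (fun x hx => hR g x hx)

/-- Multiplication `V ⊗ kG → S ⋊ G`. -/
def embVGA : V ⊗[k] MonoidAlgebra k G →ₗ[k] SkewA k G V R ρ :=
  (LinearMap.mul' k _).comp (TensorProduct.map (vA k G V R ρ) (gA k G V R ρ))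

/-- Multiplication `kG ⊗ V → S ⋊ G`. -/
def embGVA : MonoidAlgebra k G ⊗[k] V →ₗ[k] SkewA k G V R ρ :=
  (LinearMap.mul' k _).comp (TensorProduct.map (gA k G V R ρ) (vA k G V R ρ))

/-- Multiplication `(V ⊗ kG) ⊗ V → S ⋊ G`. -/
def embVGVA : (V ⊗[k] MonoidAlgebra k G) ⊗[k] V →ₗ[k] SkewA k G V R ρ :=
  (LinearMap.mul' k _).comp (TensorProduct.map (embVGA k G V R ρ) (vA k G V R ρ))

/-- Multiplication `V ⊗ (V ⊗ kG) → S ⋊ G`. -/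
def embVVGA : V ⊗[k] (V ⊗[k] MonoidAlgebra k G) →ₗ[k] SkewA k G V R ρ :=
  (LinearMap.mul' k _).comp (TensorProduct.map (vA k G V R ρ) (embVGA k G V R ρ))

/-- The inclusion `R ⊗ V → V ⊗ (V ⊗ V)`. -/
def inclRV : (R : Submodule k (V ⊗[k] V)) ⊗[k] V →ₗ[k] V ⊗[k] (V ⊗[k] V) :=
  (TensorProduct.assoc k V V V).toLinearMap.comp
    (TensorProduct.map R.subtype LinearMap.id)

/-- The inclusion `V ⊗ R → V ⊗ (V ⊗ V)`. -/
def inclVR : V ⊗[k] (R : Submodule k (V ⊗[k] V)) →ₗ[k] V ⊗[k] (V ⊗[k] V) :=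
  TensorProduct.map LinearMap.id R.subtype

/-- The inclusion `R ⊗ kG → V ⊗ (V ⊗ kG)`. -/
def inclRG : (R : Submodule k (V ⊗[k] V)) ⊗[k] MonoidAlgebra k G →ₗ[k]
    V ⊗[k] (V ⊗[k] MonoidAlgebra k G) :=
  (TensorProduct.assoc k V V (MonoidAlgebra k G)).toLinearMap.comp
    (TensorProduct.map R.subtype LinearMap.id)

/-- `((1 ⊗ σ)(α ⊗ 1) − 1 ⊗ α)(x)`, computed from the two presentations
`x₁ ∈ R ⊗ V` and `x₂ ∈ V ⊗ R` of an element `x ∈ (R ⊗ V) ∩ (V ⊗ R)`. -/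
def Theta (x₁ : (R : Submodule k (V ⊗[k] V)) ⊗[k] V)
    (x₂ : V ⊗[k] (R : Submodule k (V ⊗[k] V))) : V ⊗[k] (V ⊗[k] MonoidAlgebra k G) :=
  (TensorProduct.map LinearMap.id (sigma k G V ρ))
      ((TensorProduct.assoc k V (MonoidAlgebra k G) V)
        ((TensorProduct.map α LinearMap.id) x₁))
    - (TensorProduct.map LinearMap.id α) x₂

/-- The extension of `α` to a right `kG`-module map `R ⊗ kG → V ⊗ kG`. -/
def αext : (R : Submodule k (V ⊗[k] V)) ⊗[k] MonoidAlgebra k G →ₗ[k]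
    V ⊗[k] MonoidAlgebra k G :=
  (TensorProduct.map LinearMap.id (LinearMap.mul' k (MonoidAlgebra k G))).comp
    (((TensorProduct.assoc k V (MonoidAlgebra k G) (MonoidAlgebra k G)).toLinearMap).comp
      (TensorProduct.map α LinearMap.id))

/-- The extension of `β` to a right `kG`-module map `R ⊗ kG → kG`. -/
def βext : (R : Submodule k (V ⊗[k] V)) ⊗[k] MonoidAlgebra k G →ₗ[k] MonoidAlgebra k G :=
  (LinearMap.mul' k (MonoidAlgebra k G)).comp (TensorProduct.map β LinearMap.id)

/-- The `g`-component `α_g : R → V` of `α`. -/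
def αComp (g : G) : (R : Submodule k (V ⊗[k] V)) →ₗ[k] V :=
  ((TensorProduct.rid k V).toLinearMap.comp
    (TensorProduct.map LinearMap.id ((Finsupp.lapply g).comp
      (MonoidAlgebra.coeffLinearEquiv k).toLinearMap))).comp α

/-- `Σ_{g ∈ G} α_g ⊗ λ(g ⊗ −)`, as a map `R ⊗ V → S ⋊ G`. -/
def sumAlphaLam [Fintype G] : (R : Submodule k (V ⊗[k] V)) ⊗[k] V →ₗ[k] SkewA k G V R ρ :=
  ∑ g : G, (embVGA k G V R ρ).comp
    (TensorProduct.map (αComp k G V R α g) (lamMk k G V lam g))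

end DeformKoszul

open DeformKoszul

/-!
`H_{λ,α,β}` is spanned by the normal words `v₁ ⋯ vₙ g`, that is, it is an image of `T(V) ⊗ kG`, and
being a PBW deformation is a statement about the dimension of the relations among normal words of
degree at most `d`.

Suppose that the conditions hold. By (1), `T(V) ⊗ kG` carries operators of `kG` and `V`
satisfying the relations `g v = (ᵍv) g + λ(g ⊗ v)`. By (2) and (3), `kG` preserves the span of
the consequences `v₁ ⋯ vᵢ (r - α(r) - β(r)) u` of the quadratic relations, so that the quotient
by them is a module over `H_{λ,α,β}` and they are all the relations. By (4)–(6), the two ways of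
reducing an element of `(V ⊗ R) ∩ (R ⊗ V)` agree modulo consequences of lower degree, and
Koszulness reduces every cancellation of leading terms to these. Hence the relations of degree at
most `d` have the same leading terms, and so the same dimension, as for `S ⋊ G`.

Conversely, if `H_{λ,α,β}` is a PBW deformation, counting dimensions in degree two shows that the
elements `(r - α(r) - β(r)) x` are the only relations among normal words of degree at most two.
Each condition states that some word, rewritten in two ways, gives such a relation.
-/

namespace DeformKoszul

section MulTensor

variable {k M M' N N' P A : Type*} [CommRing k] [Ring A] [Algebra k A]
  [AddCommGroup M] [Module k M] [AddCommGroup M'] [Module k M'] [AddCommGroup N] [Module k N]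
  [AddCommGroup N'] [Module k N'] [AddCommGroup P] [Module k P]

/-- The product `f ⊙ g : M ⊗ N → A`, `m ⊗ n ↦ f m * g n`, of two linear maps into an algebra. -/
def mulTensor (f : M →ₗ[k] A) (g : N →ₗ[k] A) : M ⊗[k] N →ₗ[k] A :=
  LinearMap.mul' k A ∘ₗ TensorProduct.map f g

local infixl:70 " ⊙ " => mulTensor

@[simp] lemma mulTensor_tmul (f : M →ₗ[k] A) (g : N →ₗ[k] A) (m : M) (n : N) :
    (f ⊙ g) (m ⊗ₜ n) = f m * g n := rfl

lemma mulTensor_comp (f : M →ₗ[k] A) (g : N →ₗ[k] A) (f' : M' →ₗ[k] M) (g' : N' →ₗ[k] N) :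
    (f ∘ₗ f') ⊙ (g ∘ₗ g') = (f ⊙ g) ∘ₗ TensorProduct.map f' g' := by
  ext; simp

lemma mulTensor_comp_left (f : M →ₗ[k] A) (g : N →ₗ[k] A) (f' : M' →ₗ[k] M) :
    (f ∘ₗ f') ⊙ g = (f ⊙ g) ∘ₗ TensorProduct.map f' .id := by
  ext; simp

lemma mulTensor_comp_right (f : M →ₗ[k] A) (g : N →ₗ[k] A) (g' : N' →ₗ[k] N) :
    f ⊙ (g ∘ₗ g') = (f ⊙ g) ∘ₗ TensorProduct.map .id g' := by
  ext; simp

lemma mulTensor_assoc (f : M →ₗ[k] A) (g : N →ₗ[k] A) (h : P →ₗ[k] A) :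
    f ⊙ g ⊙ h = (f ⊙ (g ⊙ h)) ∘ₗ (TensorProduct.assoc k M N P).toLinearMap := by
  ext; simp [mul_assoc]

lemma mulTensor_add_left (f f' : M →ₗ[k] A) (g : N →ₗ[k] A) :
    (f + f') ⊙ g = f ⊙ g + f' ⊙ g := by
  ext; simp [add_mul]

lemma mulTensor_add_right (f : M →ₗ[k] A) (g g' : N →ₗ[k] A) :
    f ⊙ (g + g') = f ⊙ g + f ⊙ g' := by
  ext; simp [mul_add]

lemma mulTensor_sub_left (f f' : M →ₗ[k] A) (g : N →ₗ[k] A) :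
    (f - f') ⊙ g = f ⊙ g - f' ⊙ g := by
  ext; simp [sub_mul]

lemma mulTensor_sub_right (f : M →ₗ[k] A) (g g' : N →ₗ[k] A) :
    f ⊙ (g - g') = f ⊙ g - f ⊙ g' := by
  ext; simp [mul_sub]

lemma algHom_comp_mulTensor {B : Type*} [Ring B] [Algebra k B] (φ : A →ₐ[k] B) (f : M →ₗ[k] A)
    (g : N →ₗ[k] A) : φ.toLinearMap ∘ₗ (f ⊙ g) = (φ.toLinearMap ∘ₗ f) ⊙ (φ.toLinearMap ∘ₗ g) := by
  ext; simp

end MulTensor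

local infixl:70 " ⊙ " => mulTensor

section TwistedPair

variable {k G V : Type} [Field k] [Group G] [AddCommGroup V] [Module k V]
  {A : Type*} [Ring A] [Algebra k A]

/-- Linear maps `a : kG → A` and `b : V → A` satisfying the relations of `H_{λ,α,β}` that do not
involve `R`: `a` is multiplicative and unital, and `g v = (ᵍv) g + λ(g ⊗ v)` holds in `A`. -/
structure IsTwistedPair (ρ : Representation k G V)
    (lam : MonoidAlgebra k G ⊗[k] V →ₗ[k] MonoidAlgebra k G)
    (a : MonoidAlgebra k G →ₗ[k] A) (b : V →ₗ[k] A) : Prop where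
  map_one : a 1 = 1
  map_mul : ∀ x y, a (x * y) = a x * a y
  act : ∀ g v, a (.of k G g) * b v = b (ρ g v) * a (.of k G g) + a (lam (.of k G g ⊗ₜ v))

/-- The left action of `g` on the skew bimodule `V ⊗ kG`. -/
def leftAct (ρ : Representation k G V) (g : G) :
    V ⊗[k] MonoidAlgebra k G →ₗ[k] V ⊗[k] MonoidAlgebra k G :=
  TensorProduct.map (ρ g) (LinearMap.mulLeft k (.of k G g))

/-- The right action of `x ∈ kG` on the skew bimodule `V ⊗ kG`. -/
def rightAct (x : MonoidAlgebra k G) : V ⊗[k] MonoidAlgebra k G →ₗ[k] V ⊗[k] MonoidAlgebra k G :=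
  TensorProduct.map .id (LinearMap.mulRight k x)

/-- The degree-one correction picked up when `g` is moved past `V ⊗ V`. -/
def correctionVG (ρ : Representation k G V)
    (lam : MonoidAlgebra k G ⊗[k] V →ₗ[k] MonoidAlgebra k G) (g : G) :
    V ⊗[k] V →ₗ[k] V ⊗[k] MonoidAlgebra k G :=
  sigma k G V ρ ∘ₗ TensorProduct.map (lamMk k G V lam g) .id
    + TensorProduct.map (ρ g) (lamMk k G V lam g)

/-- The degree-zero correction picked up when `g` is moved past `V ⊗ V`. -/
def correctionG (lam : MonoidAlgebra k G ⊗[k] V →ₗ[k] MonoidAlgebra k G) (g : G) :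
    V ⊗[k] V →ₗ[k] MonoidAlgebra k G :=
  lam ∘ₗ TensorProduct.map (lamMk k G V lam g) .id

@[simp] lemma sigma_of_tmul (ρ : Representation k G V) (g : G) (v : V) :
    sigma k G V ρ (MonoidAlgebra.of k G g ⊗ₜ v) = ρ g v ⊗ₜ MonoidAlgebra.of k G g := by
  simp [sigma]

lemma lamMk_apply (lam : MonoidAlgebra k G ⊗[k] V →ₗ[k] MonoidAlgebra k G) (g : G) (v : V) :
    lamMk k G V lam g v = lam (MonoidAlgebra.of k G g ⊗ₜ v) := rfl

namespace IsTwistedPair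

variable {ρ : Representation k G V} {lam : MonoidAlgebra k G ⊗[k] V →ₗ[k] MonoidAlgebra k G}
  {a : MonoidAlgebra k G →ₗ[k] A} {b : V →ₗ[k] A} (h : IsTwistedPair ρ lam a b)
include h

lemma mulTensor_groupAlgebra : a ⊙ a = a ∘ₗ LinearMap.mul' k (MonoidAlgebra k G) := by
  exact TensorProduct.ext' fun x y ↦ (h.map_mul x y).symm

lemma mulTensor_swap : a ⊙ b = (b ⊙ a) ∘ₗ sigma k G V ρ + a ∘ₗ lam := by
  refine TensorProduct.ext' fun x v ↦ ?_
  induction x using MonoidAlgebra.induction_on with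
  | of g => simpa [-MonoidAlgebra.of_apply] using h.act g v
  | add x y hx hy => simp only [add_tmul, map_add, hx, hy]
  | smul c x hx => simp only [← smul_tmul', map_smul, hx]

lemma mul_mulTensor_VV (g : G) (t : V ⊗[k] V) :
    a (.of k G g) * (b ⊙ b) t = (b ⊙ b) (TensorProduct.map (ρ g) (ρ g) t) * a (.of k G g)
      + (b ⊙ a) (correctionVG ρ lam g t) + a (correctionG lam g t) := by
  induction t using TensorProduct.induction_on with
  | zero => simp
  | add x y hx hy => simp only [map_add, mul_add, add_mul, hx, hy]; abel
  | tmul v w =>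
    have swap := LinearMap.congr_fun h.mulTensor_swap (lam (.of k G g ⊗ₜ v) ⊗ₜ w)
    simp only [mulTensor_tmul, LinearMap.add_apply, LinearMap.comp_apply] at swap
    simp only [mulTensor_tmul, ← mul_assoc, h.act, add_mul, TensorProduct.map_tmul, correctionVG,
      correctionG, LinearMap.add_apply, LinearMap.comp_apply, LinearMap.id_apply, map_add,
      lamMk_apply, swap]
    rw [mul_assoc (b _) (a _) (b w), h.act, mul_add, mul_assoc (b _) (b _)]
    abel

lemma mul_mulTensor_VG (g : G) (s : V ⊗[k] MonoidAlgebra k G) :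
    a (.of k G g) * (b ⊙ a) s = (b ⊙ a) (leftAct ρ g s)
      + a (LinearMap.mul' k _ (TensorProduct.map (lamMk k G V lam g) .id s)) := by
  induction s using TensorProduct.induction_on with
  | zero => simp
  | add x y hx hy => simp only [map_add, mul_add, hx, hy]; abel
  | tmul v x =>
    simp only [mulTensor_tmul, ← mul_assoc, h.act, add_mul, TensorProduct.map_tmul, leftAct,
      LinearMap.id_apply, lamMk_apply, LinearMap.mul'_apply, LinearMap.mulLeft_apply, h.map_mul]

lemma mulTensor_VG_mul (x : MonoidAlgebra k G) (s : V ⊗[k] MonoidAlgebra k G) :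
    (b ⊙ a) s * a x = (b ⊙ a) (rightAct x s) := by
  induction s using TensorProduct.induction_on with
  | zero => simp
  | add s t hs ht => simp only [map_add, add_mul, hs, ht]
  | tmul v y => simp [rightAct, h.map_mul, mul_assoc]

lemma mulTensor_VG_mulTensor_V :
    b ⊙ a ⊙ b = ((b ⊙ (b ⊙ a)) ∘ₗ TensorProduct.map .id (sigma k G V ρ)
      + (b ⊙ a) ∘ₗ TensorProduct.map .id lam)
        ∘ₗ (TensorProduct.assoc k V (MonoidAlgebra k G) V).toLinearMap := by
  rw [mulTensor_assoc, h.mulTensor_swap, mulTensor_add_right, mulTensor_comp_right,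
    mulTensor_comp_right]

end IsTwistedPair

end TwistedPair

section LowerTerm

variable {k G V : Type} [Field k] [AddCommGroup V] [Module k V] {A : Type*} [Ring A] [Algebra k A]
  (a : MonoidAlgebra k G →ₗ[k] A) (b : V →ₗ[k] A) {R : Submodule k (V ⊗[k] V)}
  (α : R →ₗ[k] V ⊗[k] MonoidAlgebra k G) (β : R →ₗ[k] MonoidAlgebra k G)

/-- The right-hand side `α(r) + β(r)` of the deformed quadratic relations, evaluated in `A`. -/
def lowerTerm : R →ₗ[k] A := (b ⊙ a) ∘ₗ α + a ∘ₗ β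

/-- The deformed quadratic relators `r - α(r) - β(r)`, evaluated in `A`. -/
def relator : R →ₗ[k] A := (b ⊙ b) ∘ₗ R.subtype - lowerTerm a b α β

lemma lowerTerm_apply (r : R) : lowerTerm a b α β r = (b ⊙ a) (α r) + a (β r) := rfl

lemma relator_apply (r : R) : relator a b α β r = (b ⊙ b) r - lowerTerm a b α β r := rfl

lemma quadratic_mulTensor :
    ((b ⊙ b) ∘ₗ R.subtype) ⊙ b = (b ⊙ (b ⊙ b)) ∘ₗ inclRV k V R := by
  rw [mulTensor_comp_left, mulTensor_assoc]; rfl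

lemma mulTensor_quadratic :
    b ⊙ ((b ⊙ b) ∘ₗ R.subtype) = (b ⊙ (b ⊙ b)) ∘ₗ inclVR k V R := by
  rw [mulTensor_comp_right]; rfl

lemma quadratic_mulTensor_groupAlgebra :
    ((b ⊙ b) ∘ₗ R.subtype) ⊙ a = (b ⊙ (b ⊙ a)) ∘ₗ inclRG k G V R := by
  rw [mulTensor_comp_left, mulTensor_assoc]; rfl

lemma mulTensor_lowerTerm :
    b ⊙ lowerTerm a b α β
      = (b ⊙ (b ⊙ a)) ∘ₗ TensorProduct.map .id α + (b ⊙ a) ∘ₗ TensorProduct.map .id β := by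
  rw [lowerTerm, mulTensor_add_right, mulTensor_comp_right, mulTensor_comp_right]

lemma algHom_comp_relator {B : Type*} [Ring B] [Algebra k B] (φ : A →ₐ[k] B) :
    φ.toLinearMap ∘ₗ relator a b α β
      = relator (φ.toLinearMap ∘ₗ a) (φ.toLinearMap ∘ₗ b) α β := by
  simp only [relator, lowerTerm, LinearMap.comp_sub, LinearMap.comp_add, ← LinearMap.comp_assoc,
    algHom_comp_mulTensor]

end LowerTerm

section Overlap

variable {k G V : Type} [Field k] [Group G] [AddCommGroup V] [Module k V]
  {A : Type*} [Ring A] [Algebra k A]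

section Definitions

variable (ρ : Representation k G V) {R : Submodule k (V ⊗[k] V)}
  (hR : ∀ (g : G), ∀ x ∈ R, TensorProduct.map (ρ g) (ρ g) x ∈ R)
  (lam : MonoidAlgebra k G ⊗[k] V →ₗ[k] MonoidAlgebra k G)
  (α : R →ₗ[k] V ⊗[k] MonoidAlgebra k G) (β : R →ₗ[k] MonoidAlgebra k G)

/-- The terms of degree one, other than those of `α ⊗ 1 - 1 ⊗ α`, left over when the two ways
of reducing an overlap `x₁ = x₂` in `(R ⊗ V) ∩ (V ⊗ R)` are compared. -/
def ambiguityVG (x₁ : R ⊗[k] V) (x₂ : V ⊗[k] R) : V ⊗[k] MonoidAlgebra k G :=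
  TensorProduct.map .id lam
      (TensorProduct.assoc k V (MonoidAlgebra k G) V (TensorProduct.map α .id x₁))
    + sigma k G V ρ (TensorProduct.map β .id x₁) - TensorProduct.map .id β x₂

/-- Conditions (1)–(6), read in `kG`, `V ⊗ kG` and `V ⊗ V ⊗ kG` instead of `S ⋊ G`. The field
`overlap` combines (4), (5) and (6): the latter says that `y` exists. -/
structure PBWConditions : Prop where
  lam_mul : ∀ (g h : G) (v : V), lam ((MonoidAlgebra.of k G g * MonoidAlgebra.of k G h) ⊗ₜ v)
    = MonoidAlgebra.of k G g * lam (MonoidAlgebra.of k G h ⊗ₜ v)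
      + lam (MonoidAlgebra.of k G g ⊗ₜ ρ h v) * MonoidAlgebra.of k G h
  mul_β : ∀ (g : G) (r : R), MonoidAlgebra.of k G g * β r
      + LinearMap.mul' k _ (TensorProduct.map (lamMk k G V lam g) .id (α r))
    = β (rActR k G V R ρ hR g r) * MonoidAlgebra.of k G g + correctionG lam g r
  mul_α : ∀ (g : G) (r : R), leftAct ρ g (α r)
    = rightAct (MonoidAlgebra.of k G g) (α (rActR k G V R ρ hR g r)) + correctionVG ρ lam g r
  overlap : ∀ (x₁ : R ⊗[k] V) (x₂ : V ⊗[k] R), inclRV k V R x₁ = inclVR k V R x₂ →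
    ∃ y, inclRG k G V R y = Theta k G V R ρ α x₁ x₂ ∧
      αext k G V R α y + ambiguityVG ρ lam α β x₁ x₂ = 0 ∧
      βext k G V R β y + lam (TensorProduct.map β .id x₁) = 0

lemma PBWConditions.zero : PBWConditions ρ hR 0 0 0 where
  lam_mul := by simp
  mul_β := by simp [correctionG]
  mul_α g r := by
    have : lamMk k G V (0 : MonoidAlgebra k G ⊗[k] V →ₗ[k] MonoidAlgebra k G) g = 0 := rfl
    simp [correctionVG, this]
  overlap _ _ _ := ⟨0, by simp [Theta, ambiguityVG]⟩

end Definitions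

namespace IsTwistedPair

variable {ρ : Representation k G V} {R : Submodule k (V ⊗[k] V)}
  {hR : ∀ (g : G), ∀ x ∈ R, TensorProduct.map (ρ g) (ρ g) x ∈ R}
  {lam : MonoidAlgebra k G ⊗[k] V →ₗ[k] MonoidAlgebra k G}
  {α : R →ₗ[k] V ⊗[k] MonoidAlgebra k G} {β : R →ₗ[k] MonoidAlgebra k G}
  {a : MonoidAlgebra k G →ₗ[k] A} {b : V →ₗ[k] A} (h : IsTwistedPair ρ lam a b)
include h

lemma lowerTerm_mulTensor :
    lowerTerm a b α β ⊙ b = (b ⊙ a ⊙ b) ∘ₗ TensorProduct.map α .id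
      + ((b ⊙ a) ∘ₗ sigma k G V ρ + a ∘ₗ lam) ∘ₗ TensorProduct.map β .id := by
  rw [lowerTerm, mulTensor_add_left, mulTensor_comp_left, mulTensor_comp_left, h.mulTensor_swap]

lemma lowerTerm_mulTensor_sub (x₁ : R ⊗[k] V) (x₂ : V ⊗[k] R) :
    (lowerTerm a b α β ⊙ b) x₁ - (b ⊙ lowerTerm a b α β) x₂
      = (b ⊙ (b ⊙ a)) (Theta k G V R ρ α x₁ x₂) + (b ⊙ a) (ambiguityVG ρ lam α β x₁ x₂)
        + a (lam (TensorProduct.map β .id x₁)) := by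
  rw [h.lowerTerm_mulTensor, mulTensor_lowerTerm, h.mulTensor_VG_mulTensor_V]
  simp only [LinearMap.add_apply, LinearMap.comp_apply, LinearEquiv.coe_coe, Theta, ambiguityVG,
    map_add, map_sub]
  abel

lemma lowerTerm_mulTensor_groupAlgebra :
    lowerTerm a b α β ⊙ a = (b ⊙ a) ∘ₗ αext k G V R α + a ∘ₗ βext k G V R β := by
  rw [lowerTerm, mulTensor_add_left, mulTensor_comp_left, mulTensor_comp_left, mulTensor_assoc,
    h.mulTensor_groupAlgebra, mulTensor_comp_right]
  rfl

lemma exists_relator_overlap (hc : PBWConditions ρ hR lam α β) (x₁ : R ⊗[k] V) (x₂ : V ⊗[k] R)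
    (hx : inclRV k V R x₁ = inclVR k V R x₂) :
    ∃ y, (relator a b α β ⊙ b) x₁ - (b ⊙ relator a b α β) x₂ = -(relator a b α β ⊙ a) y := by
  obtain ⟨y, hΘ, hα, hβ⟩ := hc.overlap x₁ x₂ hx
  refine ⟨y, ?_⟩
  have cubic : (relator a b α β ⊙ b) x₁ - (b ⊙ relator a b α β) x₂
      = -((lowerTerm a b α β ⊙ b) x₁ - (b ⊙ lowerTerm a b α β) x₂) := by
    simp only [relator, mulTensor_sub_left, mulTensor_sub_right, quadratic_mulTensor,
      mulTensor_quadratic, LinearMap.sub_apply, LinearMap.comp_apply, hx]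
    abel
  rw [cubic, h.lowerTerm_mulTensor_sub, relator, mulTensor_sub_left,
    quadratic_mulTensor_groupAlgebra, h.lowerTerm_mulTensor_groupAlgebra]
  simp only [LinearMap.sub_apply, LinearMap.add_apply, LinearMap.comp_apply, hΘ,
    eq_neg_of_add_eq_zero_left hα, eq_neg_of_add_eq_zero_left hβ, map_neg]
  abel

lemma mul_relator (hc : PBWConditions ρ hR lam α β) (g : G) (r : R) :
    a (.of k G g) * relator a b α β r
      = relator a b α β (rActR k G V R ρ hR g r) * a (.of k G g) := by
  have hβ := congrArg a (hc.mul_β g r)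
  have hr : (rActR k G V R ρ hR g r : V ⊗[k] V) = TensorProduct.map (ρ g) (ρ g) r := rfl
  simp only [map_add] at hβ
  simp only [relator_apply, lowerTerm_apply, mul_sub, sub_mul, mul_add, add_mul,
    h.mul_mulTensor_VV, h.mul_mulTensor_VG, h.mulTensor_VG_mul, hc.mul_α, ← h.map_mul, map_add, hr]
  rw [← sub_eq_zero] at hβ ⊢
  rw [← neg_eq_zero, ← hβ]
  abel

end IsTwistedPair

end Overlap

section FreeModule

variable (k G V : Type) [Field k] [AddCommGroup V] [Module k V]

/-- The space `V^{⊗n} ⊗ kG`, bracketed to the right. -/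
def Piece : ℕ → ModuleCat.{0} k
  | 0 => ModuleCat.of k (MonoidAlgebra k G)
  | n + 1 => ModuleCat.of k (V ⊗[k] Piece n)

/-- The identification of `Piece k G V 0` with `kG`. -/
def pieceZero : MonoidAlgebra k G ≃ₗ[k] Piece k G V 0 := LinearEquiv.refl k (MonoidAlgebra k G)

/-- The identification of `Piece k G V (n + 1)` with `V ⊗ Piece k G V n`. -/
def pieceSucc (n : ℕ) : V ⊗[k] Piece k G V n ≃ₗ[k] Piece k G V (n + 1) :=
  LinearEquiv.refl k (V ⊗[k] Piece k G V n)

/-- The graded space `T(V) ⊗ kG = ⨁ n, V^{⊗n} ⊗ kG`, on which the deformed relations act. -/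
abbrev FreeMod := DirectSum ℕ fun n ↦ Piece k G V n

/-- The inclusion of the degree-`n` piece. -/
def incl (n : ℕ) : Piece k G V n →ₗ[k] FreeMod k G V :=
  DirectSum.lof k ℕ (fun n ↦ Piece k G V n) n

/-- The projection to the degree-`n` piece. -/
def proj (n : ℕ) : FreeMod k G V →ₗ[k] Piece k G V n :=
  DirectSum.component k ℕ (fun n ↦ Piece k G V n) n

/-- The operators `x ↦ v ⊗ x` on `T(V) ⊗ kG`. -/
def opV : V →ₗ[k] Module.End k (FreeMod k G V) :=
  (DirectSum.toModule k ℕ (V →ₗ[k] FreeMod k G V) fun n ↦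
    ((TensorProduct.mk k V (Piece k G V n)).compr₂
      (incl k G V (n + 1) ∘ₗ (pieceSucc k G V n).toLinearMap)).flip).flip

@[simp] lemma opV_incl (v : V) (n : ℕ) (u : Piece k G V n) :
    opV k G V v (incl k G V n u) = incl k G V (n + 1) (pieceSucc k G V n (v ⊗ₜ u)) := by
  simp [opV, incl, DirectSum.toModule_lof]

variable {k G V}

@[simp] lemma proj_incl (n : ℕ) (u : Piece k G V n) : proj k G V n (incl k G V n u) = u := by
  simp [proj, incl]

lemma proj_incl_of_ne {n j : ℕ} (h : j ≠ n) (u : Piece k G V j) :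
    proj k G V n (incl k G V j u) = 0 := by
  rw [proj, incl, DirectSum.component.of, dif_neg h]

@[elab_as_elim]
lemma Piece.succ_induction {n : ℕ} {P : Piece k G V (n + 1) → Prop} (zero : P 0)
    (add : ∀ x y, P x → P y → P (x + y)) (tmul : ∀ v u, P (pieceSucc k G V n (v ⊗ₜ u)))
    (u : Piece k G V (n + 1)) : P u := by
  obtain ⟨t, rfl⟩ := (pieceSucc k G V n).surjective u
  induction t using TensorProduct.induction_on with
  | zero => exact zero
  | add x y hx hy => rw [map_add]; exact add _ _ hx hy
  | tmul v u => exact tmul v u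

@[elab_as_elim]
lemma FreeMod.induction {P : FreeMod k G V → Prop} (zero : P 0)
    (add : ∀ x y, P x → P y → P (x + y))
    (base : ∀ x, P (incl k G V 0 (pieceZero k G V x)))
    (opV : ∀ v m, P m → P (opV k G V v m)) (m : FreeMod k G V) : P m := by
  induction m using DirectSum.induction_on with
  | zero => exact zero
  | add x y hx hy => exact add x y hx hy
  | of n u =>
    change P (incl k G V n u)
    induction n with
    | zero => exact base ((pieceZero k G V).symm u)
    | succ n ih =>
      induction u using Piece.succ_induction with
      | zero => simpa using zero
      | add x y hx hy => rw [map_add]; exact add _ _ hx hy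
      | tmul v u => rw [← opV_incl]; exact opV _ _ (ih u)

section GroupAlgebraAction

variable [Group G] (ρ : Representation k G V)
  (lam : MonoidAlgebra k G ⊗[k] V →ₗ[k] MonoidAlgebra k G)

/-- The action of `kG` on `V^{⊗n} ⊗ kG`, by left multiplication on `kG` for `n = 0` and then
forced by `g (v ⊗ u) = ᵍv ⊗ g u + λ(g ⊗ v) u`. -/
def action : (n : ℕ) → MonoidAlgebra k G →ₗ[k] Piece k G V n →ₗ[k] FreeMod k G V
  | 0 => ((LinearMap.mul k (MonoidAlgebra k G)).compr₂
      (incl k G V 0 ∘ₗ (pieceZero k G V).toLinearMap)).compl₂ (pieceZero k G V).symm.toLinearMap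
  | n + 1 => (MonoidAlgebra.basis G k).constr k fun g ↦
      TensorProduct.lift
        (LinearMap.lcomp k (FreeMod k G V) (action n (.of k G g)) ∘ₗ opV k G V ∘ₗ ρ g
          + action n ∘ₗ lamMk k G V lam g) ∘ₗ (pieceSucc k G V n).symm.toLinearMap

/-- The operators by which `kG` acts on `T(V) ⊗ kG`. -/
def opG : MonoidAlgebra k G →ₗ[k] Module.End k (FreeMod k G V) :=
  (DirectSum.toModule k ℕ (MonoidAlgebra k G →ₗ[k] FreeMod k G V) fun n ↦
    (action ρ lam n).flip).flip

lemma opG_incl (x : MonoidAlgebra k G) (n : ℕ) (u : Piece k G V n) :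
    opG ρ lam x (incl k G V n u) = action ρ lam n x u := by
  simp [opG, incl, DirectSum.toModule_lof]

@[simp] lemma opG_incl_zero (x y : MonoidAlgebra k G) :
    opG ρ lam x (incl k G V 0 (pieceZero k G V y)) = incl k G V 0 (pieceZero k G V (x * y)) := by
  simp [opG_incl, action]

lemma opG_opV (g : G) (v : V) (m : FreeMod k G V) :
    opG ρ lam (.of k G g) (opV k G V v m) = opV k G V (ρ g v) (opG ρ lam (.of k G g) m)
      + opG ρ lam (lam (.of k G g ⊗ₜ v)) m := by
  induction m using DirectSum.induction_on with
  | zero => simp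
  | add x y hx hy => simp only [map_add, hx, hy]; abel
  | of n u =>
    change opG ρ lam _ (opV k G V v (incl k G V n u)) = opV k G V _ (opG ρ lam _ (incl k G V n u))
      + opG ρ lam _ (incl k G V n u)
    have hg : MonoidAlgebra.of k G g = MonoidAlgebra.basis G k g := by simp
    rw [opV_incl, opG_incl, opG_incl, opG_incl, action, hg, Module.Basis.constr_basis, ← hg]
    simp [-MonoidAlgebra.of_apply, lamMk_apply]

variable {ρ lam}

section LamMul

variable (lam_mul : ∀ (g h : G) (v : V),
    lam ((MonoidAlgebra.of k G g * MonoidAlgebra.of k G h) ⊗ₜ v)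
      = MonoidAlgebra.of k G g * lam (MonoidAlgebra.of k G h ⊗ₜ v)
        + lam (MonoidAlgebra.of k G g ⊗ₜ ρ h v) * MonoidAlgebra.of k G h)
include lam_mul

lemma opG_one : opG ρ lam 1 = 1 := by
  refine LinearMap.ext fun m ↦ ?_
  induction m using FreeMod.induction with
  | zero => simp
  | add x y hx hy => rw [map_add, map_add, hx, hy]
  | base x => simp
  | opV v m hm =>
    have lam_one : lam ((1 : MonoidAlgebra k G) ⊗ₜ v) = 0 := by
      have := lam_mul 1 1 v
      rw [map_one, map_one, mul_one, mul_one, one_mul, Module.End.one_apply] at this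
      exact left_eq_add.mp this
    have := opG_opV ρ lam 1 v m
    rwa [map_one (MonoidAlgebra.of k G), map_one ρ, lam_one, map_zero, LinearMap.zero_apply,
      add_zero, hm] at this

lemma opG_mul (x y : MonoidAlgebra k G) : opG ρ lam (x * y) = opG ρ lam x * opG ρ lam y := by
  refine LinearMap.ext fun m ↦ ?_
  induction m using FreeMod.induction generalizing x y with
  | zero => simp
  | add m m' hm hm' => simp only [map_add, hm, hm']
  | base z => simp [mul_assoc]
  | opV v m hm =>
    simp only [Module.End.mul_apply] at hm ⊢
    induction x using MonoidAlgebra.induction_on with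
    | add x x' hx hx' => simp only [add_mul, map_add, LinearMap.add_apply, hx, hx']
    | smul c x hx => simp only [smul_mul_assoc, map_smul, LinearMap.smul_apply, hx]
    | of g =>
    induction y using MonoidAlgebra.induction_on with
    | add y y' hy hy' => simp only [mul_add, map_add, LinearMap.add_apply, hy, hy']
    | smul c y hy => simp only [mul_smul_comm, map_smul, LinearMap.smul_apply, hy]
    | of h =>
      rw [opG_opV ρ lam h v, map_add, opG_opV, ← hm, ← hm, ← hm, ← map_mul, opG_opV, map_mul,
        map_mul, lam_mul, map_add, LinearMap.add_apply, Module.End.mul_apply]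
      abel

lemma isTwistedPair_opG_opV : IsTwistedPair ρ lam (opG ρ lam) (opV k G V) where
  map_one := opG_one lam_mul
  map_mul := opG_mul lam_mul
  act g v := LinearMap.ext (opG_opV ρ lam g v)

end LamMul

end GroupAlgebraAction

end FreeModule

section Stability

variable {k M N P : Type*} [CommRing k] [AddCommGroup M] [Module k M] [AddCommGroup N] [Module k N]
  [AddCommGroup P] [Module k P]

lemma mulTensor_apply_mem {f : M →ₗ[k] Module.End k P} {g : N →ₗ[k] Module.End k P}
    {S S' S'' : Submodule k P} (hf : ∀ x, ∀ m ∈ S', f x m ∈ S'') (hg : ∀ y, ∀ m ∈ S, g y m ∈ S')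
    (t : M ⊗[k] N) {m : P} (hm : m ∈ S) : (f ⊙ g) t m ∈ S'' := by
  induction t using TensorProduct.induction_on with
  | zero => simp
  | add x y hx hy => rw [map_add]; exact add_mem hx hy
  | tmul x y => exact hf x _ (hg y m hm)

end Stability

section Filtration

variable {k G V : Type} [Field k] [AddCommGroup V] [Module k V]

lemma lowerTerm_apply_mem {M : Type*} [AddCommGroup M] [Module k M]
    {a : MonoidAlgebra k G →ₗ[k] Module.End k M} {b : V →ₗ[k] Module.End k M}
    {R : Submodule k (V ⊗[k] V)} {α : R →ₗ[k] V ⊗[k] MonoidAlgebra k G}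
    {β : R →ₗ[k] MonoidAlgebra k G} {S S' : Submodule k M} (hS : S ≤ S')
    (ha : ∀ x, ∀ m ∈ S, a x m ∈ S) (hb : ∀ v, ∀ m ∈ S, b v m ∈ S') (r : R) {m : M} (hm : m ∈ S) :
    lowerTerm a b α β r m ∈ S' :=
  add_mem (mulTensor_apply_mem hb ha _ hm) (hS (ha _ _ hm))

variable (k G V) in
/-- The increasing filtration of `T(V) ⊗ kG` by degree. -/
def filtration (n : ℕ) : Submodule k (FreeMod k G V) :=
  partialSups (fun n ↦ LinearMap.range (incl k G V n)) n

lemma filtration_succ (n : ℕ) :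
    filtration k G V (n + 1) = filtration k G V n ⊔ LinearMap.range (incl k G V (n + 1)) :=
  partialSups_succ _ n

lemma filtration_mono : Monotone (filtration k G V) := (partialSups _).monotone

lemma range_incl_le_filtration (n : ℕ) : LinearMap.range (incl k G V n) ≤ filtration k G V n :=
  le_partialSups (fun n ↦ LinearMap.range (incl k G V n)) n

lemma incl_mem_filtration {j n : ℕ} (h : j ≤ n) (u : Piece k G V j) :
    incl k G V j u ∈ filtration k G V n :=
  filtration_mono h (range_incl_le_filtration j ⟨u, rfl⟩)

lemma filtration_le {n : ℕ} {S : Submodule k (FreeMod k G V)}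
    (h : ∀ j ≤ n, ∀ u, incl k G V j u ∈ S) : filtration k G V n ≤ S :=
  partialSups_le _ n _ fun j hj ↦ LinearMap.range_le_iff_comap.mpr
    (eq_top_iff.mpr fun u _ ↦ h j hj u)

lemma exists_mem_filtration (m : FreeMod k G V) : ∃ n, m ∈ filtration k G V n := by
  induction m using DirectSum.induction_on with
  | zero => exact ⟨0, zero_mem _⟩
  | of n u => exact ⟨n, incl_mem_filtration le_rfl u⟩
  | add x y hx hy =>
    obtain ⟨n, hn⟩ := hx
    obtain ⟨p, hp⟩ := hy
    exact ⟨max n p, add_mem (filtration_mono (le_max_left _ _) hn)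
      (filtration_mono (le_max_right _ _) hp)⟩

lemma proj_eq_zero_of_mem_filtration {n j : ℕ} (h : n < j) {m : FreeMod k G V}
    (hm : m ∈ filtration k G V n) : proj k G V j m = 0 :=
  filtration_le (S := LinearMap.ker (proj k G V j))
    (fun i hi u ↦ proj_incl_of_ne (by lia) u) hm

lemma opV_mem_filtration {n : ℕ} (v : V) {m : FreeMod k G V} (hm : m ∈ filtration k G V n) :
    opV k G V v m ∈ filtration k G V (n + 1) :=
  filtration_le (S := (filtration k G V (n + 1)).comap (opV k G V v)) (fun j hj u ↦ by
    rw [Submodule.mem_comap, opV_incl]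
    exact incl_mem_filtration (by lia) _) hm

lemma mem_filtration_of_proj_eq_zero {n : ℕ} {m : FreeMod k G V}
    (hm : m ∈ filtration k G V (n + 1)) (h : proj k G V (n + 1) m = 0) :
    m ∈ filtration k G V n := by
  rw [filtration_succ] at hm
  obtain ⟨m', hm', _, ⟨u, rfl⟩, rfl⟩ := Submodule.mem_sup.mp hm
  rw [map_add, proj_incl, proj_eq_zero_of_mem_filtration n.lt_succ_self hm', zero_add] at h
  simpa [h] using hm'

instance [Finite G] [FiniteDimensional k V] (n : ℕ) : FiniteDimensional k (Piece k G V n) := by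
  induction n with
  | zero =>
    have : Module.Finite k (MonoidAlgebra k G) :=
      Module.Finite.equiv (MonoidAlgebra.coeffLinearEquiv k).symm
    exact Module.Finite.equiv (pieceZero k G V)
  | succ n ih => exact Module.Finite.equiv (pieceSucc k G V n)

instance [Finite G] [FiniteDimensional k V] (n : ℕ) :
    FiniteDimensional k (filtration k G V n) := by
  induction n with
  | zero => exact inferInstanceAs (FiniteDimensional k (LinearMap.range (incl k G V 0)))
  | succ n ih => rw [filtration_succ]; infer_instance

end Filtration

section Relations

variable {k G V : Type} [Field k] [Group G] [AddCommGroup V] [Module k V]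
  (ρ : Representation k G V) (lam : MonoidAlgebra k G ⊗[k] V →ₗ[k] MonoidAlgebra k G)

lemma opG_incl_mem_filtration (x : MonoidAlgebra k G) (n : ℕ) (u : Piece k G V n) :
    opG ρ lam x (incl k G V n u) ∈ filtration k G V n := by
  induction n generalizing x with
  | zero =>
    obtain ⟨y, rfl⟩ := (pieceZero k G V).surjective u
    rw [opG_incl_zero]
    exact incl_mem_filtration le_rfl _
  | succ n ih =>
    induction u using Piece.succ_induction with
    | zero => simp
    | add u w hu hw => rw [map_add, map_add]; exact add_mem hu hw
    | tmul v u =>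
      induction x using MonoidAlgebra.induction_on with
      | add x y hx hy => rw [map_add]; exact add_mem hx hy
      | smul c x hx => rw [map_smul]; exact Submodule.smul_mem _ _ hx
      | of g =>
        rw [← opV_incl, opG_opV]
        exact add_mem (opV_mem_filtration _ (ih _ u)) (filtration_mono n.le_succ (ih _ u))

lemma opG_mem_filtration {n : ℕ} {m : FreeMod k G V} (x : MonoidAlgebra k G)
    (hm : m ∈ filtration k G V n) : opG ρ lam x m ∈ filtration k G V n :=
  filtration_le (S := (filtration k G V n).comap (opG ρ lam x))
    (fun j hj u ↦ filtration_mono hj (opG_incl_mem_filtration ρ lam x j u)) hm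

variable {R : Submodule k (V ⊗[k] V)} (α : R →ₗ[k] V ⊗[k] MonoidAlgebra k G)
  (β : R →ₗ[k] MonoidAlgebra k G)

lemma lowerTerm_mem_filtration {n : ℕ} {m : FreeMod k G V} (r : R)
    (hm : m ∈ filtration k G V n) :
    lowerTerm (opG ρ lam) (opV k G V) α β r m ∈ filtration k G V (n + 1) :=
  lowerTerm_apply_mem (filtration_mono n.le_succ) (fun x _ ↦ opG_mem_filtration ρ lam x)
    (fun v _ ↦ opV_mem_filtration v) r hm

lemma relator_mem_filtration {n : ℕ} {m : FreeMod k G V} (r : R)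
    (hm : m ∈ filtration k G V n) :
    relator (opG ρ lam) (opV k G V) α β r m ∈ filtration k G V (n + 2) :=
  sub_mem (mulTensor_apply_mem (fun v _ ↦ opV_mem_filtration v) (fun v _ ↦ opV_mem_filtration v)
      (r : V ⊗[k] V) hm)
    (filtration_mono (n + 1).le_succ (lowerTerm_mem_filtration ρ lam α β r hm))

/-- The span in degree at most `n` of the consequences `v₁ ⋯ vᵢ (r - α(r) - β(r)) u` of the deformed
quadratic relations; no cancellation of leading terms is used. -/
def relations : ℕ → Submodule k (FreeMod k G V)
  | 0 => ⊥
  | 1 => ⊥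
  | n + 2 => Submodule.map₂ (relator (opG ρ lam) (opV k G V) α β) ⊤ (filtration k G V n)
      ⊔ Submodule.map₂ (opV k G V) ⊤ (relations (n + 1))

variable {ρ lam α β}

lemma relator_mem_relations {n : ℕ} {m : FreeMod k G V} (r : R) (hm : m ∈ filtration k G V n) :
    relator (opG ρ lam) (opV k G V) α β r m ∈ relations ρ lam α β (n + 2) :=
  Submodule.mem_sup_left (Submodule.apply_mem_map₂ _ Submodule.mem_top hm)

lemma opV_mem_relations {n : ℕ} {m : FreeMod k G V} (v : V) (hm : m ∈ relations ρ lam α β n) :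
    opV k G V v m ∈ relations ρ lam α β (n + 1) := by
  rcases n with _ | n
  · rw [(Submodule.mem_bot k).mp hm, map_zero]
    exact zero_mem _
  · exact Submodule.mem_sup_right (Submodule.apply_mem_map₂ _ Submodule.mem_top hm)

lemma relations_add_two_le {n : ℕ} {S : Submodule k (FreeMod k G V)}
    (hq : ∀ r, ∀ m ∈ filtration k G V n, relator (opG ρ lam) (opV k G V) α β r m ∈ S)
    (hv : ∀ v, ∀ m ∈ relations ρ lam α β (n + 1), opV k G V v m ∈ S) :
    relations ρ lam α β (n + 2) ≤ S :=
  sup_le (Submodule.map₂_le.mpr fun r _ ↦ hq r) (Submodule.map₂_le.mpr fun v _ ↦ hv v)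

lemma relations_le_filtration : ∀ n, relations ρ lam α β n ≤ filtration k G V n
  | 0 | 1 => bot_le
  | n + 2 => relations_add_two_le (fun r _ ↦ relator_mem_filtration ρ lam α β r)
      fun v _ hm ↦ opV_mem_filtration v (relations_le_filtration (n + 1) hm)

lemma relations_le_succ : ∀ n, relations ρ lam α β n ≤ relations ρ lam α β (n + 1)
  | 0 | 1 => bot_le
  | n + 2 => relations_add_two_le
      (fun r _ hm ↦ relator_mem_relations r (filtration_mono n.le_succ hm))
      fun v _ hm ↦ opV_mem_relations v (relations_le_succ (n + 1) hm)

lemma relations_mono : Monotone (relations ρ lam α β) := monotone_nat_of_le_succ relations_le_succ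

variable {hR : ∀ (g : G), ∀ x ∈ R, TensorProduct.map (ρ g) (ρ g) x ∈ R}

lemma opG_mem_relations (hc : PBWConditions ρ hR lam α β) (x : MonoidAlgebra k G) {n : ℕ}
    {m : FreeMod k G V} (hm : m ∈ relations ρ lam α β n) :
    opG ρ lam x m ∈ relations ρ lam α β n := by
  induction n generalizing m x with
  | zero => simp_all [relations]
  | succ n ih =>
    rcases n with _ | n
    · simp_all [relations]
    induction x using MonoidAlgebra.induction_on with
    | add x y hx hy => rw [map_add]; exact add_mem hx hy
    | smul c x hx => rw [map_smul]; exact Submodule.smul_mem _ _ hx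
    | of g =>
      refine relations_add_two_le (S := (relations ρ lam α β (n + 2)).comap
        (opG ρ lam (.of k G g))) (fun r m hm ↦ ?_) (fun v m hm ↦ ?_) hm
      · rw [Submodule.mem_comap, ← Module.End.mul_apply,
          (isTwistedPair_opG_opV hc.lam_mul).mul_relator hc]
        exact relator_mem_relations _ (opG_mem_filtration ρ lam _ hm)
      · rw [Submodule.mem_comap, opG_opV]
        exact add_mem (opV_mem_relations _ (ih _ hm)) (relations_le_succ _ (ih _ hm))

lemma lowerTerm_mem_relations (hc : PBWConditions ρ hR lam α β) (r : R) {n : ℕ}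
    {m : FreeMod k G V} (hm : m ∈ relations ρ lam α β n) :
    lowerTerm (opG ρ lam) (opV k G V) α β r m ∈ relations ρ lam α β (n + 1) :=
  lowerTerm_apply_mem (relations_le_succ n) (fun x _ ↦ opG_mem_relations hc x)
    (fun v _ ↦ opV_mem_relations v) r hm

end Relations

section TensorSubmodule

variable {k X Y : Type*} [Field k] [AddCommGroup X] [Module k X] [AddCommGroup Y] [Module k Y]

/-- The subspace `A ⊗ B` of `X ⊗ Y`. -/
def tensorSubmodule (A : Submodule k X) (B : Submodule k Y) : Submodule k (X ⊗[k] Y) :=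
  Submodule.map₂ (TensorProduct.mk k X Y) A B

lemma tmul_mem_tensorSubmodule {A : Submodule k X} {B : Submodule k Y} {x : X} {y : Y}
    (hx : x ∈ A) (hy : y ∈ B) : x ⊗ₜ[k] y ∈ tensorSubmodule A B :=
  Submodule.apply_mem_map₂ _ hx hy

lemma tensorSubmodule_le {A : Submodule k X} {B : Submodule k Y} {S : Submodule k (X ⊗[k] Y)} :
    tensorSubmodule A B ≤ S ↔ ∀ x ∈ A, ∀ y ∈ B, x ⊗ₜ[k] y ∈ S :=
  Submodule.map₂_le

lemma exists_proj (A : Submodule k X) :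
    ∃ p : X →ₗ[k] X, (∀ x, p x ∈ A) ∧ ∀ x ∈ A, p x = x := by
  obtain ⟨p, hp⟩ := A.subtype.exists_leftInverse_of_injective A.ker_subtype
  exact ⟨A.subtype ∘ₗ p, fun x ↦ (p x).2,
    fun x hx ↦ congrArg Subtype.val (LinearMap.congr_fun hp ⟨x, hx⟩)⟩

lemma map_eq_self_of_mem_tensorSubmodule {A : Submodule k X} {B : Submodule k Y}
    {p : X →ₗ[k] X} {q : Y →ₗ[k] Y} (hp : ∀ x ∈ A, p x = x) (hq : ∀ y ∈ B, q y = y)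
    {w : X ⊗[k] Y} (hw : w ∈ tensorSubmodule A B) : TensorProduct.map p q w = w :=
  (tensorSubmodule_le (S := LinearMap.eqLocus (TensorProduct.map p q) .id)).mpr
    (fun x hx y hy ↦ by simp [hp x hx, hq y hy]) hw

lemma map_mem_tensorSubmodule {A : Submodule k X} {B : Submodule k Y} {p : X →ₗ[k] X}
    {q : Y →ₗ[k] Y} (hp : ∀ x, p x ∈ A) (hq : ∀ y, q y ∈ B) (w : X ⊗[k] Y) :
    TensorProduct.map p q w ∈ tensorSubmodule A B := by
  induction w using TensorProduct.induction_on with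
  | zero => simp
  | add x y hx hy => rw [map_add]; exact add_mem hx hy
  | tmul x y => exact tmul_mem_tensorSubmodule (hp x) (hq y)

lemma mem_tensorSubmodule_top_iff {ι : Type*} [DecidableEq ι] (c : Module.Basis ι k Y)
    {A : Submodule k X} {w : X ⊗[k] Y} :
    w ∈ tensorSubmodule A ⊤ ↔ ∀ i, TensorProduct.equivFinsuppOfBasisRight c w i ∈ A := by
  refine ⟨fun hw i ↦ ?_, fun hw ↦ ?_⟩
  · refine (tensorSubmodule_le (S := A.comap (Finsupp.lapply i ∘ₗ
      (TensorProduct.equivFinsuppOfBasisRight c).toLinearMap))).mpr (fun x hx y _ ↦ ?_) hw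
    simpa using A.smul_mem _ hx
  · rw [← (TensorProduct.equivFinsuppOfBasisRight c).symm_apply_apply w,
      TensorProduct.equivFinsuppOfBasisRight_symm_apply]
    exact Submodule.sum_mem _ fun i _ ↦ tmul_mem_tensorSubmodule (hw i) Submodule.mem_top

lemma mem_top_tensorSubmodule_iff {ι : Type*} [DecidableEq ι] (c : Module.Basis ι k X)
    {B : Submodule k Y} {w : X ⊗[k] Y} :
    w ∈ tensorSubmodule ⊤ B ↔ ∀ i, TensorProduct.equivFinsuppOfBasisLeft c w i ∈ B := by
  refine ⟨fun hw i ↦ ?_, fun hw ↦ ?_⟩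
  · refine (tensorSubmodule_le (S := B.comap (Finsupp.lapply i ∘ₗ
      (TensorProduct.equivFinsuppOfBasisLeft c).toLinearMap))).mpr (fun x _ y hy ↦ ?_) hw
    simpa using B.smul_mem _ hy
  · rw [← (TensorProduct.equivFinsuppOfBasisLeft c).symm_apply_apply w,
      TensorProduct.equivFinsuppOfBasisLeft_symm_apply]
    exact Submodule.sum_mem _ fun i _ ↦ tmul_mem_tensorSubmodule Submodule.mem_top (hw i)

lemma tensorSubmodule_mono {A A' : Submodule k X} {B B' : Submodule k Y} (hA : A ≤ A')
    (hB : B ≤ B') : tensorSubmodule A B ≤ tensorSubmodule A' B' :=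
  Submodule.map₂_le_map₂ hA hB

lemma tensorSubmodule_inf_le (A A' : Submodule k X) (B B' : Submodule k Y) :
    tensorSubmodule A B ⊓ tensorSubmodule A' B' ≤ tensorSubmodule (A ⊓ A') (B ⊓ B') := by
  classical
  rintro w ⟨hw, hw'⟩
  have left : w ∈ tensorSubmodule (A ⊓ A') ⊤ :=
    (mem_tensorSubmodule_top_iff (Module.Basis.ofVectorSpace k Y)).mpr fun i ↦
      ⟨(mem_tensorSubmodule_top_iff _).mp (tensorSubmodule_mono le_rfl le_top hw) i,
        (mem_tensorSubmodule_top_iff _).mp (tensorSubmodule_mono le_rfl le_top hw') i⟩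
  have right : w ∈ tensorSubmodule ⊤ (B ⊓ B') :=
    (mem_top_tensorSubmodule_iff (Module.Basis.ofVectorSpace k X)).mpr fun i ↦
      ⟨(mem_top_tensorSubmodule_iff _).mp (tensorSubmodule_mono le_top le_rfl hw) i,
        (mem_top_tensorSubmodule_iff _).mp (tensorSubmodule_mono le_top le_rfl hw') i⟩
  obtain ⟨p, hpA, hp⟩ := exists_proj (A ⊓ A')
  obtain ⟨q, hqB, hq⟩ := exists_proj (B ⊓ B')
  have fixed : TensorProduct.map p q w = w := by
    rw [← LinearMap.comp_id p, ← LinearMap.id_comp q, TensorProduct.map_comp, LinearMap.comp_apply,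
      map_eq_self_of_mem_tensorSubmodule (fun _ _ ↦ rfl) hq right,
      map_eq_self_of_mem_tensorSubmodule hp (fun _ _ ↦ rfl) left]
  exact fixed ▸ map_mem_tensorSubmodule hpA hqB w

end TensorSubmodule

section RelPiece

variable {k G V : Type} [Field k] [AddCommGroup V] [Module k V]

variable (k G V) in
/-- The identification of `Piece k G V (n + 2)` with `(V ⊗ V) ⊗ Piece k G V n`. -/
def pieceAddTwo (n : ℕ) : (V ⊗[k] V) ⊗[k] Piece k G V n ≃ₗ[k] Piece k G V (n + 2) :=
  TensorProduct.assoc k V V (Piece k G V n) ≪≫ₗ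
    TensorProduct.congr (.refl k V) (pieceSucc k G V n) ≪≫ₗ pieceSucc k G V (n + 1)

variable (k G V) in
/-- The identification of `Piece k G V (n + 3)` with `(V ⊗ (V ⊗ V)) ⊗ Piece k G V n`. -/
def pieceAddThree (n : ℕ) : (V ⊗[k] (V ⊗[k] V)) ⊗[k] Piece k G V n ≃ₗ[k] Piece k G V (n + 3) :=
  TensorProduct.assoc k V (V ⊗[k] V) (Piece k G V n) ≪≫ₗ
    TensorProduct.congr (.refl k V) (pieceAddTwo k G V n) ≪≫ₗ pieceSucc k G V (n + 2)

@[simp] lemma pieceAddTwo_tmul (n : ℕ) (v w : V) (u : Piece k G V n) :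
    pieceAddTwo k G V n ((v ⊗ₜ w) ⊗ₜ u)
      = pieceSucc k G V (n + 1) (v ⊗ₜ pieceSucc k G V n (w ⊗ₜ u)) := rfl

@[simp] lemma pieceAddThree_tmul (n : ℕ) (v : V) (t : V ⊗[k] V) (u : Piece k G V n) :
    pieceAddThree k G V n ((v ⊗ₜ t) ⊗ₜ u)
      = pieceSucc k G V (n + 2) (v ⊗ₜ pieceAddTwo k G V n (t ⊗ₜ u)) := rfl

lemma pieceAddThree_assoc (n : ℕ) (t : V ⊗[k] V) (v : V) (u : Piece k G V n) :
    pieceAddThree k G V n (TensorProduct.assoc k V V V (t ⊗ₜ v) ⊗ₜ u)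
      = pieceAddTwo k G V (n + 1) (t ⊗ₜ pieceSucc k G V n (v ⊗ₜ u)) := by
  induction t using TensorProduct.induction_on with
  | zero => simp
  | add x y hx hy => simp only [add_tmul, map_add, hx, hy]
  | tmul x y => rfl

lemma mulTensor_opV_incl (n : ℕ) (t : V ⊗[k] V) (u : Piece k G V n) :
    (opV k G V ⊙ opV k G V) t (incl k G V n u)
      = incl k G V (n + 2) (pieceAddTwo k G V n (t ⊗ₜ u)) := by
  induction t using TensorProduct.induction_on with
  | zero => simp
  | add x y hx hy => simp only [add_tmul, map_add, LinearMap.add_apply, hx, hy]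
  | tmul v w => simp

variable (R : Submodule k (V ⊗[k] V))

variable (G) in
/-- The subspace `V^{⊗i} ⊗ R ⊗ V^{⊗(n-i-2)} ⊗ kG` of `V^{⊗n} ⊗ kG`, which is `⊥` if `n < i + 2`. -/
def relPiece : (n : ℕ) → ℕ → Submodule k (Piece k G V n)
  | n + 2, 0 => (tensorSubmodule R ⊤).map (pieceAddTwo k G V n).toLinearMap
  | n + 1, i + 1 => (tensorSubmodule ⊤ (relPiece n i)).map (pieceSucc k G V n).toLinearMap
  | 0, _ => ⊥
  | 1, 0 => ⊥

variable {R}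

lemma relPiece_zero_le {n : ℕ} {S : Submodule k (Piece k G V (n + 2))}
    (h : ∀ r ∈ R, ∀ u, pieceAddTwo k G V n (r ⊗ₜ u) ∈ S) : relPiece G R (n + 2) 0 ≤ S := by
  rw [relPiece, Submodule.map_le_iff_le_comap]
  exact tensorSubmodule_le.mpr fun r hr u _ ↦ h r hr u

lemma relPiece_succ_le {n i : ℕ} {S : Submodule k (Piece k G V (n + 1))}
    (h : ∀ v, ∀ u ∈ relPiece G R n i, pieceSucc k G V n (v ⊗ₜ u) ∈ S) :
    relPiece G R (n + 1) (i + 1) ≤ S := by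
  rw [relPiece, Submodule.map_le_iff_le_comap]
  exact tensorSubmodule_le.mpr fun v _ u hu ↦ h v u hu

lemma relPiece_eq_bot {n i : ℕ} (h : n < i + 2) : relPiece G R n i = ⊥ := by
  induction n generalizing i with
  | zero => rw [relPiece]
  | succ n ih =>
    rcases i with _ | i
    · obtain rfl : n = 0 := by lia
      rw [relPiece]
    · refine eq_bot_iff.mpr (relPiece_succ_le fun v u hu ↦ ?_)
      rw [ih (by lia), Submodule.mem_bot] at hu
      simp [hu]

lemma eq_zero_of_mem_relPiece {n i : ℕ} (h : n < i + 2) {w : Piece k G V n}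
    (hw : w ∈ relPiece G R n i) : w = 0 := by
  rwa [relPiece_eq_bot h, Submodule.mem_bot] at hw

lemma relPiece_succ_inf_succ_le {n i j : ℕ} {S : Submodule k (Piece k G V (n + 1))}
    (h : ∀ v, ∀ u ∈ relPiece G R n i ⊓ relPiece G R n j, pieceSucc k G V n (v ⊗ₜ u) ∈ S) :
    relPiece G R (n + 1) (i + 1) ⊓ relPiece G R (n + 1) (j + 1) ≤ S := by
  rw [relPiece, relPiece, ← Submodule.map_inf _ (pieceSucc k G V n).injective,
    Submodule.map_le_iff_le_comap]
  exact (tensorSubmodule_inf_le _ _ _ _).trans (tensorSubmodule_le.mpr fun v _ u hu ↦ h v u hu)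

lemma relPiece_add_two_le (n j : ℕ) : relPiece G R (n + 2) (j + 2) ≤
    (tensorSubmodule ⊤ (relPiece G R n j)).map (pieceAddTwo k G V n).toLinearMap := by
  refine relPiece_succ_le fun v u hu ↦ ?_
  refine relPiece_succ_le (S := ((tensorSubmodule ⊤ (relPiece G R n j)).map
    (pieceAddTwo k G V n).toLinearMap).comap ((pieceSucc k G V (n + 1)).toLinearMap ∘ₗ
      TensorProduct.mk k V _ v)) (fun w u hu ↦ ?_) hu
  exact ⟨(v ⊗ₜ w) ⊗ₜ u, tmul_mem_tensorSubmodule Submodule.mem_top hu, pieceAddTwo_tmul n v w u⟩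

lemma relPiece_zero_inf_add_two_le {n j : ℕ} {S : Submodule k (Piece k G V (n + 2))}
    (h : ∀ r ∈ R, ∀ u ∈ relPiece G R n j, pieceAddTwo k G V n (r ⊗ₜ u) ∈ S) :
    relPiece G R (n + 2) 0 ⊓ relPiece G R (n + 2) (j + 2) ≤ S := by
  refine (inf_le_inf_left _ (relPiece_add_two_le n j)).trans ?_
  rw [relPiece, ← Submodule.map_inf _ (pieceAddTwo k G V n).injective,
    Submodule.map_le_iff_le_comap]
  exact (tensorSubmodule_inf_le _ _ _ _).trans
    (tensorSubmodule_le.mpr fun r hr u hu ↦ h r hr.1 u hu.2)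

lemma relPiece_add_three_zero_le (n : ℕ) : relPiece G R (n + 3) 0 ≤
    (tensorSubmodule (LinearMap.range (inclRV k V R)) ⊤).map
      (pieceAddThree k G V n).toLinearMap := by
  refine relPiece_zero_le fun r hr u ↦ ?_
  induction u using Piece.succ_induction with
  | zero => simp
  | add x y hx hy => rw [tmul_add, map_add]; exact add_mem hx hy
  | tmul v u =>
    exact ⟨inclRV k V R (⟨r, hr⟩ ⊗ₜ v) ⊗ₜ u, tmul_mem_tensorSubmodule ⟨_, rfl⟩ Submodule.mem_top,
      pieceAddThree_assoc n r v u⟩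

lemma relPiece_add_three_one_le (n : ℕ) : relPiece G R (n + 3) 1 ≤
    (tensorSubmodule (LinearMap.range (inclVR k V R)) ⊤).map
      (pieceAddThree k G V n).toLinearMap := by
  refine relPiece_succ_le fun v u hu ↦ ?_
  refine relPiece_zero_le (S := ((tensorSubmodule (LinearMap.range (inclVR k V R)) ⊤).map
    (pieceAddThree k G V n).toLinearMap).comap ((pieceSucc k G V (n + 2)).toLinearMap ∘ₗ
      TensorProduct.mk k V _ v)) (fun r hr u ↦ ?_) hu
  exact ⟨inclVR k V R (v ⊗ₜ ⟨r, hr⟩) ⊗ₜ u, tmul_mem_tensorSubmodule ⟨_, rfl⟩ Submodule.mem_top,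
    pieceAddThree_tmul n v r u⟩

lemma relPiece_zero_inf_one_le {n : ℕ} {S : Submodule k (Piece k G V (n + 3))}
    (h : ∀ x₁ x₂, inclRV k V R x₁ = inclVR k V R x₂ →
      ∀ u, pieceAddThree k G V n (inclRV k V R x₁ ⊗ₜ u) ∈ S) :
    relPiece G R (n + 3) 0 ⊓ relPiece G R (n + 3) 1 ≤ S := by
  refine (inf_le_inf (relPiece_add_three_zero_le n) (relPiece_add_three_one_le n)).trans ?_
  rw [← Submodule.map_inf _ (pieceAddThree k G V n).injective, Submodule.map_le_iff_le_comap]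
  refine (tensorSubmodule_inf_le _ _ _ _).trans (tensorSubmodule_le.mpr ?_)
  rintro _ ⟨⟨x₁, rfl⟩, ⟨x₂, hx⟩⟩ u -
  exact h x₁ x₂ hx.symm u

end RelPiece

section Lift

variable {k G V : Type} [Field k] [Group G] [AddCommGroup V] [Module k V]
  (ρ : Representation k G V) (lam : MonoidAlgebra k G ⊗[k] V →ₗ[k] MonoidAlgebra k G)
  {R : Submodule k (V ⊗[k] V)} (α : R →ₗ[k] V ⊗[k] MonoidAlgebra k G)
  (β : R →ₗ[k] MonoidAlgebra k G)

/-- An extension of the relators `r - α(r) - β(r)` from `R` to `V ⊗ V`. It is an arbitrary choice,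
made to have everywhere defined maps; only its restriction to `R` matters. -/
def relatorExt : V ⊗[k] V →ₗ[k] Module.End k (FreeMod k G V) :=
  (relator (opG ρ lam) (opV k G V) α β).exists_extend.choose

lemma relatorExt_apply (r : R) :
    relatorExt ρ lam α β r = relator (opG ρ lam) (opV k G V) α β r :=
  LinearMap.congr_fun (relator (opG ρ lam) (opV k G V) α β).exists_extend.choose_spec r

/-- The lift `v₁ ⋯ vᵢ r u ↦ v₁ ⋯ vᵢ (r - α(r) - β(r)) u` of `V^{⊗i} ⊗ R ⊗ V^{⊗(n-i-2)} ⊗ kG` to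
elements of `relations ρ lam α β n`. It is meaningful on `relPiece G R n i` only. -/
def liftRel : ℕ → (n : ℕ) → Piece k G V n →ₗ[k] FreeMod k G V
  | 0, n + 2 => TensorProduct.lift (LinearMap.lcomp k (FreeMod k G V) (incl k G V n) ∘ₗ
      relatorExt ρ lam α β) ∘ₗ (pieceAddTwo k G V n).symm.toLinearMap
  | i + 1, n + 1 => TensorProduct.lift (LinearMap.lcomp k (FreeMod k G V) (liftRel i n) ∘ₗ
      opV k G V) ∘ₗ (pieceSucc k G V n).symm.toLinearMap
  | 0, 0 => 0
  | 0, 1 => 0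
  | _ + 1, 0 => 0

lemma liftRel_zero (n : ℕ) (r : R) (u : Piece k G V n) :
    liftRel ρ lam α β 0 (n + 2) (pieceAddTwo k G V n ((r : V ⊗[k] V) ⊗ₜ u))
      = relator (opG ρ lam) (opV k G V) α β r (incl k G V n u) := by
  rw [liftRel, LinearMap.comp_apply, LinearEquiv.coe_coe, LinearEquiv.symm_apply_apply,
    TensorProduct.lift.tmul, LinearMap.comp_apply, relatorExt_apply, LinearMap.lcomp_apply]

lemma liftRel_succ (i n : ℕ) (v : V) (u : Piece k G V n) :
    liftRel ρ lam α β (i + 1) (n + 1) (pieceSucc k G V n (v ⊗ₜ u))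
      = opV k G V v (liftRel ρ lam α β i n u) := by
  rw [liftRel, LinearMap.comp_apply, LinearEquiv.coe_coe, LinearEquiv.symm_apply_apply,
    TensorProduct.lift.tmul, LinearMap.comp_apply, LinearMap.lcomp_apply]

lemma liftRel_add_two (i n : ℕ) (t : V ⊗[k] V) (u : Piece k G V n) :
    liftRel ρ lam α β (i + 2) (n + 2) (pieceAddTwo k G V n (t ⊗ₜ u))
      = (opV k G V ⊙ opV k G V) t (liftRel ρ lam α β i n u) := by
  induction t using TensorProduct.induction_on with
  | zero => simp
  | add x y hx hy => simp only [add_tmul, map_add, LinearMap.add_apply, hx, hy]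
  | tmul v w => simp [liftRel_succ]

lemma liftRel_zero_inclRV (n : ℕ) (x : R ⊗[k] V) (u : Piece k G V n) :
    liftRel ρ lam α β 0 (n + 3) (pieceAddThree k G V n (inclRV k V R x ⊗ₜ u))
      = (relator (opG ρ lam) (opV k G V) α β ⊙ opV k G V) x (incl k G V n u) := by
  induction x using TensorProduct.induction_on with
  | zero => simp
  | add x y hx hy => simp only [add_tmul, map_add, LinearMap.add_apply, hx, hy]
  | tmul r v =>
    have : inclRV k V R (r ⊗ₜ v) = TensorProduct.assoc k V V V ((r : V ⊗[k] V) ⊗ₜ v) := rfl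
    rw [this, pieceAddThree_assoc, liftRel_zero, mulTensor_tmul, Module.End.mul_apply, opV_incl]

lemma liftRel_one_inclVR (n : ℕ) (x : V ⊗[k] R) (u : Piece k G V n) :
    liftRel ρ lam α β 1 (n + 3) (pieceAddThree k G V n (inclVR k V R x ⊗ₜ u))
      = (opV k G V ⊙ relator (opG ρ lam) (opV k G V) α β) x (incl k G V n u) := by
  induction x using TensorProduct.induction_on with
  | zero => simp
  | add x y hx hy => simp only [add_tmul, map_add, LinearMap.add_apply, hx, hy]
  | tmul v r =>
    have : inclVR k V R (v ⊗ₜ r) = v ⊗ₜ (r : V ⊗[k] V) := rfl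
    rw [this, pieceAddThree_tmul, liftRel_succ, liftRel_zero, mulTensor_tmul,
      Module.End.mul_apply]

variable {ρ lam α β}

lemma liftRel_mem_relations {i n : ℕ} {w : Piece k G V n} (hw : w ∈ relPiece G R n i) :
    liftRel ρ lam α β i n w ∈ relations ρ lam α β n := by
  induction i generalizing n with
  | zero =>
    rcases n with _ | _ | n
    · rw [liftRel]; exact zero_mem _
    · rw [liftRel]; exact zero_mem _
    · refine relPiece_zero_le (S := (relations ρ lam α β (n + 2)).comap
        (liftRel ρ lam α β 0 (n + 2))) (fun r hr u ↦ ?_) hw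
      rw [Submodule.mem_comap, liftRel_zero _ _ _ _ _ ⟨r, hr⟩]
      exact relator_mem_relations _ (incl_mem_filtration le_rfl u)
  | succ i ih =>
    rcases n with _ | n
    · rw [liftRel]; exact zero_mem _
    · refine relPiece_succ_le (S := (relations ρ lam α β (n + 1)).comap
        (liftRel ρ lam α β (i + 1) (n + 1))) (fun v u hu ↦ ?_) hw
      rw [Submodule.mem_comap, liftRel_succ]
      exact opV_mem_relations v (ih hu)

lemma incl_sub_liftRel_mem_filtration {i n : ℕ} {w : Piece k G V (n + 1)}
    (hw : w ∈ relPiece G R (n + 1) i) :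
    incl k G V (n + 1) w - liftRel ρ lam α β i (n + 1) w ∈ filtration k G V n := by
  induction i generalizing n with
  | zero =>
    rcases n with _ | n
    · simp [eq_zero_of_mem_relPiece (by lia) hw]
    refine relPiece_zero_le (S := (filtration k G V (n + 1)).comap
      (incl k G V (n + 2) - liftRel ρ lam α β 0 (n + 2))) (fun r hr u ↦ ?_) hw
    rw [Submodule.mem_comap, LinearMap.sub_apply, liftRel_zero _ _ _ _ _ ⟨r, hr⟩, relator_apply,
      LinearMap.sub_apply, mulTensor_opV_incl, sub_sub_cancel]
    exact lowerTerm_mem_filtration ρ lam α β _ (incl_mem_filtration le_rfl u)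
  | succ i ih =>
    rcases n with _ | n
    · simp [eq_zero_of_mem_relPiece (by lia) hw]
    refine relPiece_succ_le (S := (filtration k G V (n + 1)).comap
      (incl k G V (n + 2) - liftRel ρ lam α β (i + 1) (n + 2))) (fun v u hu ↦ ?_) hw
    rw [Submodule.mem_comap, LinearMap.sub_apply, liftRel_succ, ← opV_incl, ← map_sub]
    exact opV_mem_filtration v (ih hu)

variable {hR : ∀ (g : G), ∀ x ∈ R, TensorProduct.map (ρ g) (ρ g) x ∈ R}

lemma liftRel_zero_sub_one_mem_relations (hc : PBWConditions ρ hR lam α β) {n : ℕ}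
    {w : Piece k G V (n + 3)} (hw : w ∈ relPiece G R (n + 3) 0 ⊓ relPiece G R (n + 3) 1) :
    liftRel ρ lam α β 0 (n + 3) w - liftRel ρ lam α β 1 (n + 3) w
      ∈ relations ρ lam α β (n + 2) := by
  refine relPiece_zero_inf_one_le (S := (relations ρ lam α β (n + 2)).comap
    (liftRel ρ lam α β 0 (n + 3) - liftRel ρ lam α β 1 (n + 3))) (fun x₁ x₂ hx u ↦ ?_) hw
  obtain ⟨y, hy⟩ := (isTwistedPair_opG_opV hc.lam_mul).exists_relator_overlap hc x₁ x₂ hx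
  rw [Submodule.mem_comap, LinearMap.sub_apply, liftRel_zero_inclRV, hx, liftRel_one_inclVR,
    ← LinearMap.sub_apply, hy]
  exact neg_mem (mulTensor_apply_mem (fun r _ ↦ relator_mem_relations r)
    (fun x _ ↦ opG_mem_filtration ρ lam x) y (incl_mem_filtration le_rfl u))

lemma liftRel_zero_sub_add_two_mem_relations (hc : PBWConditions ρ hR lam α β) {n j : ℕ}
    {w : Piece k G V (n + 3)}
    (hw : w ∈ relPiece G R (n + 3) 0 ⊓ relPiece G R (n + 3) (j + 2)) :
    liftRel ρ lam α β 0 (n + 3) w - liftRel ρ lam α β (j + 2) (n + 3) w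
      ∈ relations ρ lam α β (n + 2) := by
  refine relPiece_zero_inf_add_two_le (S := (relations ρ lam α β (n + 2)).comap
    (liftRel ρ lam α β 0 (n + 3) - liftRel ρ lam α β (j + 2) (n + 3))) (fun r hr u hu ↦ ?_) hw
  rw [Submodule.mem_comap, LinearMap.sub_apply, liftRel_zero _ _ _ _ _ ⟨r, hr⟩, liftRel_add_two]
  -- The two lifts of `r ⊗ u` differ by `q(u - u') - lowerTerm(u')`, where `q` is the relator of `r`
  -- and `u'` is the lift of `u`.
  have telescope : ∀ u' : FreeMod k G V,
      relator (opG ρ lam) (opV k G V) α β ⟨r, hr⟩ (incl k G V (n + 1) u)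
        - (opV k G V ⊙ opV k G V) r u'
      = relator (opG ρ lam) (opV k G V) α β ⟨r, hr⟩ (incl k G V (n + 1) u - u')
        - lowerTerm (opG ρ lam) (opV k G V) α β ⟨r, hr⟩ u' := by
    intro u'
    rw [map_sub, relator_apply]
    simp only [LinearMap.sub_apply]
    abel
  rw [telescope]
  exact sub_mem (relator_mem_relations _ (incl_sub_liftRel_mem_filtration hu))
    (lowerTerm_mem_relations hc _ (liftRel_mem_relations hu))

lemma liftRel_sub_liftRel_mem_relations (hc : PBWConditions ρ hR lam α β) {i j n : ℕ}
    (hij : i < j) {w : Piece k G V (n + 1)}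
    (hw : w ∈ relPiece G R (n + 1) i ⊓ relPiece G R (n + 1) j) :
    liftRel ρ lam α β i (n + 1) w - liftRel ρ lam α β j (n + 1) w ∈ relations ρ lam α β n := by
  rcases lt_or_ge (n + 1) (j + 2) with hn | hn
  · simp [eq_zero_of_mem_relPiece hn hw.2]
  induction i generalizing n j with
  | zero =>
    obtain ⟨n, rfl⟩ : ∃ p, n = p + 2 := ⟨n - 2, by lia⟩
    rcases j with _ | _ | j
    · lia
    · exact liftRel_zero_sub_one_mem_relations hc hw
    · exact liftRel_zero_sub_add_two_mem_relations hc hw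
  | succ i ih =>
    obtain ⟨j, rfl⟩ : ∃ p, j = p + 1 := ⟨j - 1, by lia⟩
    obtain ⟨n, rfl⟩ : ∃ p, n = p + 1 := ⟨n - 1, by lia⟩
    refine relPiece_succ_inf_succ_le (S := (relations ρ lam α β (n + 1)).comap
      (liftRel ρ lam α β (i + 1) (n + 2) - liftRel ρ lam α β (j + 1) (n + 2)))
      (fun v u hu ↦ ?_) hw
    rw [Submodule.mem_comap, LinearMap.sub_apply, liftRel_succ, liftRel_succ, ← map_sub]
    exact opV_mem_relations v (ih (by lia) hu (by lia))

end Lift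

section TensorSubmodule

variable {k X Y X' Y' Z : Type*} [Field k] [AddCommGroup X] [Module k X] [AddCommGroup Y]
  [Module k Y] [AddCommGroup X'] [Module k X'] [AddCommGroup Y'] [Module k Y'] [AddCommGroup Z]
  [Module k Z]

lemma tensorSubmodule_top_top : tensorSubmodule (⊤ : Submodule k X) (⊤ : Submodule k Y) = ⊤ :=
  TensorProduct.map₂_mk_top_top_eq_top k X Y

lemma map_congr_tensorSubmodule (e : X ≃ₗ[k] X') (e' : Y ≃ₗ[k] Y') (A : Submodule k X)
    (B : Submodule k Y) : (tensorSubmodule A B).map (TensorProduct.congr e e').toLinearMap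
      = tensorSubmodule (A.map e.toLinearMap) (B.map e'.toLinearMap) := by
  rw [tensorSubmodule, tensorSubmodule, Submodule.map_map₂, Submodule.map₂_map_map]
  rfl

lemma tensorSubmodule_map_top (e : X ≃ₗ[k] X') (A : Submodule k X) :
    tensorSubmodule (A.map e.toLinearMap) (⊤ : Submodule k Y)
      = (tensorSubmodule A ⊤).map (TensorProduct.congr e (.refl k Y)).toLinearMap := by
  rw [map_congr_tensorSubmodule, LinearEquiv.refl_toLinearMap, Submodule.map_id]

lemma map_assoc_tensorSubmodule (A : Submodule k X) (B : Submodule k Y) (C : Submodule k Z) :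
    (tensorSubmodule (tensorSubmodule A B) C).map (TensorProduct.assoc k X Y Z).toLinearMap
      = tensorSubmodule A (tensorSubmodule B C) := by
  refine le_antisymm ?_ ?_
  · rw [Submodule.map_le_iff_le_comap]
    refine tensorSubmodule_le.mpr fun t ht z hz ↦ ?_
    refine tensorSubmodule_le (S := (tensorSubmodule A (tensorSubmodule B C)).comap
      ((TensorProduct.assoc k X Y Z).toLinearMap ∘ₗ (TensorProduct.mk k (X ⊗[k] Y) Z).flip z)).mpr
      (fun x hx y hy ↦ ?_) ht
    exact tmul_mem_tensorSubmodule hx (tmul_mem_tensorSubmodule hy hz)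
  · refine tensorSubmodule_le.mpr fun x hx t ht ↦ ?_
    refine tensorSubmodule_le (S := ((tensorSubmodule (tensorSubmodule A B) C).map
      (TensorProduct.assoc k X Y Z).toLinearMap).comap (TensorProduct.mk k X (Y ⊗[k] Z) x)).mpr
      (fun y hy z hz ↦ ?_) ht
    exact ⟨(x ⊗ₜ y) ⊗ₜ z, tmul_mem_tensorSubmodule (tmul_mem_tensorSubmodule hx hy) hz, rfl⟩

lemma range_map_subtype_id (A : Submodule k X) :
    LinearMap.range (TensorProduct.map A.subtype (.id : Y →ₗ[k] Y)) = tensorSubmodule A ⊤ := by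
  rw [TensorProduct.range_map, Submodule.range_subtype, LinearMap.range_id]
  rfl

lemma range_map_id_subtype (B : Submodule k Y) :
    LinearMap.range (TensorProduct.map (.id : X →ₗ[k] X) B.subtype) = tensorSubmodule ⊤ B := by
  rw [TensorProduct.range_map, Submodule.range_subtype, LinearMap.range_id]
  rfl

end TensorSubmodule

section Glue

lemma exists_linearMap_eq_of_basis {k X Y ι I : Type*} [Field k] [AddCommGroup X] [Module k X]
    [AddCommGroup Y] [Module k Y] (b : Module.Basis ι k X) (W : I → Submodule k X)
    (hW : ∀ i, ∃ J : Set ι, W i = Submodule.span k (b '' J)) (f : I → X →ₗ[k] Y)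
    (hf : ∀ i j, ∀ x ∈ W i ⊓ W j, f i x = f j x) :
    ∃ F : X →ₗ[k] Y, ∀ i, ∀ x ∈ W i, F x = f i x := by
  classical
  let value (s : ι) : Y := if h : ∃ i, b s ∈ W i then f h.choose (b s) else 0
  refine ⟨b.constr k value, fun i x hx ↦ ?_⟩
  obtain ⟨J, hJ⟩ := hW i
  refine LinearMap.eqOn_span (f := b.constr k value) (g := f i) (s := b '' J) ?_ (hJ ▸ hx)
  rintro _ ⟨s, hs, rfl⟩
  have hi : b s ∈ W i := hJ ▸ Submodule.subset_span ⟨s, hs, rfl⟩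
  have h : ∃ i, b s ∈ W i := ⟨i, hi⟩
  rw [Module.Basis.constr_basis, show value s = _ from dif_pos h]
  exact hf _ _ _ ⟨h.choose_spec, hi⟩

variable {k G V : Type} [Field k] [AddCommGroup V] [Module k V] (R : Submodule k (V ⊗[k] V))

variable (k V) in
/-- The identification of `Vpow k V 0` with `V`. -/
def vpowZero : V ≃ₗ[k] Vpow k V 0 := LinearEquiv.refl k V

variable (k V) in
/-- The identification of `Vpow k V (n + 1)` with `V ⊗ Vpow k V n`. -/
def vpowSucc (n : ℕ) : V ⊗[k] Vpow k V n ≃ₗ[k] Vpow k V (n + 1) :=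
  LinearEquiv.refl k (V ⊗[k] Vpow k V n)

variable (k V) in
/-- The identification of `Vpow k V (n + 2)` with `(V ⊗ V) ⊗ Vpow k V n`. -/
def vpowAddTwo (n : ℕ) : (V ⊗[k] V) ⊗[k] Vpow k V n ≃ₗ[k] Vpow k V (n + 2) :=
  TensorProduct.assoc k V V (Vpow k V n) ≪≫ₗ
    TensorProduct.congr (.refl k V) (vpowSucc k V n) ≪≫ₗ vpowSucc k V (n + 1)

variable (k G V) in
/-- The identification of `V^{⊗(n+1)} ⊗ kG` with `Piece k G V (n + 1)`. -/
def vpowEquiv : (n : ℕ) → Vpow k V n ⊗[k] MonoidAlgebra k G ≃ₗ[k] Piece k G V (n + 1)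
  | 0 => TensorProduct.congr (vpowZero k V).symm (pieceZero k G V) ≪≫ₗ pieceSucc k G V 0
  | n + 1 => TensorProduct.congr (vpowSucc k V n).symm (.refl k (MonoidAlgebra k G)) ≪≫ₗ
      TensorProduct.assoc k V (Vpow k V n) (MonoidAlgebra k G) ≪≫ₗ
        TensorProduct.congr (.refl k V) (vpowEquiv n) ≪≫ₗ pieceSucc k G V (n + 1)

lemma Wsub_zero (i : ℕ) : Wsub k V R 0 i = ⊥ := rfl

lemma Wsub_one_zero : Wsub k V R 1 0
    = R.map (TensorProduct.congr (.refl k V) (vpowZero k V) ≪≫ₗ vpowSucc k V 0).toLinearMap := by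
  have : (TensorProduct.congr (.refl k V) (vpowZero k V) ≪≫ₗ vpowSucc k V 0).toLinearMap
      = (.id : V ⊗[k] V →ₗ[k] V ⊗[k] V) := TensorProduct.ext' fun _ _ ↦ rfl
  rw [this]
  exact (Submodule.map_id R).symm

lemma Wsub_add_two_zero (n : ℕ) : Wsub k V R (n + 2) 0
    = (tensorSubmodule R ⊤).map (vpowAddTwo k V n).toLinearMap := by
  have : (vpowAddTwo k V n).toLinearMap = (TensorProduct.assoc k V V (Vpow k V n)).toLinearMap :=
    TensorProduct.ext_threefold fun _ _ _ ↦ rfl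
  rw [this]
  exact congrArg (Submodule.map _) (range_map_subtype_id R)

lemma Wsub_succ_succ (n i : ℕ) : Wsub k V R (n + 1) (i + 1)
    = (tensorSubmodule ⊤ (Wsub k V R n i)).map (vpowSucc k V n).toLinearMap := by
  refine .trans ?_ (Submodule.map_id _).symm
  rcases n with _ | n
  · exact (Submodule.map₂_bot_right (TensorProduct.mk k V (Vpow k V 0)) ⊤).symm
  · exact range_map_id_subtype _

lemma congr_trans_vpowEquiv_one :
    TensorProduct.congr (TensorProduct.congr (.refl k V) (vpowZero k V) ≪≫ₗ vpowSucc k V 0)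
        (.refl k (MonoidAlgebra k G)) ≪≫ₗ vpowEquiv k G V 1
      = TensorProduct.congr (.refl k (V ⊗[k] V)) (pieceZero k G V) ≪≫ₗ pieceAddTwo k G V 0 :=
  LinearEquiv.toLinearMap_injective (TensorProduct.ext_threefold fun _ _ _ ↦ rfl)

lemma congr_trans_vpowEquiv_add_two (n : ℕ) :
    TensorProduct.congr (vpowAddTwo k V n) (.refl k (MonoidAlgebra k G)) ≪≫ₗ vpowEquiv k G V (n + 2)
      = TensorProduct.assoc k (V ⊗[k] V) (Vpow k V n) (MonoidAlgebra k G) ≪≫ₗ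
        TensorProduct.congr (.refl k (V ⊗[k] V)) (vpowEquiv k G V n) ≪≫ₗ
          pieceAddTwo k G V (n + 1) :=
  LinearEquiv.toLinearMap_injective (TensorProduct.ext_fourfold fun _ _ _ _ ↦ rfl)

lemma congr_trans_vpowEquiv_succ (n : ℕ) :
    TensorProduct.congr (vpowSucc k V n) (.refl k (MonoidAlgebra k G)) ≪≫ₗ vpowEquiv k G V (n + 1)
      = TensorProduct.assoc k V (Vpow k V n) (MonoidAlgebra k G) ≪≫ₗ
        TensorProduct.congr (.refl k V) (vpowEquiv k G V n) ≪≫ₗ pieceSucc k G V (n + 1) :=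
  LinearEquiv.toLinearMap_injective (TensorProduct.ext_threefold fun _ _ _ ↦ rfl)

lemma relPiece_succ_eq_map_vpowEquiv (n i : ℕ) : relPiece G R (n + 1) i
    = (tensorSubmodule (Wsub k V R n i) ⊤).map (vpowEquiv k G V n).toLinearMap := by
  induction n generalizing i with
  | zero =>
    rw [relPiece_eq_bot (by lia), Wsub_zero, tensorSubmodule, Submodule.map₂_bot_left,
      Submodule.map_bot]
  | succ n ih =>
    rcases i with _ | i
    · rcases n with _ | n
      · rw [Wsub_one_zero, tensorSubmodule_map_top, ← Submodule.map_comp, ← LinearEquiv.coe_trans,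
          congr_trans_vpowEquiv_one]
        simp only [relPiece, LinearEquiv.coe_trans, Submodule.map_comp, map_congr_tensorSubmodule,
          LinearEquiv.refl_toLinearMap, Submodule.map_id, Submodule.map_top, LinearEquiv.range]
      · rw [Wsub_add_two_zero, tensorSubmodule_map_top, ← Submodule.map_comp,
          ← LinearEquiv.coe_trans, congr_trans_vpowEquiv_add_two]
        simp only [relPiece, LinearEquiv.coe_trans, Submodule.map_comp, map_assoc_tensorSubmodule,
          tensorSubmodule_top_top, map_congr_tensorSubmodule, LinearEquiv.refl_toLinearMap,
          Submodule.map_id, Submodule.map_top, LinearEquiv.range]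
    · rw [Wsub_succ_succ, tensorSubmodule_map_top, ← Submodule.map_comp, ← LinearEquiv.coe_trans,
        congr_trans_vpowEquiv_succ]
      simp only [relPiece, ih, LinearEquiv.coe_trans, Submodule.map_comp,
        map_assoc_tensorSubmodule, map_congr_tensorSubmodule, LinearEquiv.refl_toLinearMap,
        Submodule.map_id]

theorem IsKoszul.exists_linearMap_eq {R : Submodule k (V ⊗[k] V)} (hK : IsKoszul k V R) {Y : Type*}
    [AddCommGroup Y] [Module k Y] {n : ℕ} (f : ℕ → Piece k G V (n + 1) →ₗ[k] Y)
    (hf : ∀ i j, i < j → ∀ w ∈ relPiece G R (n + 1) i ⊓ relPiece G R (n + 1) j, f i w = f j w) :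
    ∃ F : Piece k G V (n + 1) →ₗ[k] Y, ∀ i, ∀ w ∈ relPiece G R (n + 1) i, F w = f i w := by
  have agree : ∀ i j, ∀ w ∈ relPiece G R (n + 1) i ⊓ relPiece G R (n + 1) j, f i w = f j w := by
    intro i j w hw
    rcases lt_trichotomy i j with h | rfl | h
    · exact hf i j h w hw
    · rfl
    · exact (hf j i h w hw.symm).symm
  obtain ⟨ι, b, hb⟩ := hK n
  obtain ⟨F, hF⟩ := exists_linearMap_eq_of_basis b (Wsub k V R n) hb
    (fun i ↦ TensorProduct.curry (f i ∘ₗ (vpowEquiv k G V n).toLinearMap)) (fun i j x hx ↦ by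
      have hmem : ∀ i, x ∈ Wsub k V R n i → ∀ a,
          vpowEquiv k G V n (x ⊗ₜ a) ∈ relPiece G R (n + 1) i := fun i hi a ↦ by
        rw [relPiece_succ_eq_map_vpowEquiv]
        exact ⟨_, tmul_mem_tensorSubmodule hi Submodule.mem_top, rfl⟩
      exact LinearMap.ext fun a ↦ agree i j _ ⟨hmem i hx.1 a, hmem j hx.2 a⟩)
  refine ⟨TensorProduct.lift F ∘ₗ (vpowEquiv k G V n).symm.toLinearMap, fun i w hw ↦ ?_⟩
  rw [relPiece_succ_eq_map_vpowEquiv] at hw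
  obtain ⟨t, ht, rfl⟩ := hw
  refine tensorSubmodule_le (S := LinearMap.eqLocus
    ((TensorProduct.lift F ∘ₗ (vpowEquiv k G V n).symm.toLinearMap) ∘ₗ
      (vpowEquiv k G V n).toLinearMap) (f i ∘ₗ (vpowEquiv k G V n).toLinearMap)).mpr
    (fun x hx a _ ↦ ?_) ht
  simp [hF i x hx]

end Glue

section Dimension

lemma finrank_map_add_finrank_ker_inf {k M N : Type*} [Field k] [AddCommGroup M] [Module k M]
    [AddCommGroup N] [Module k N] (f : M →ₗ[k] N) (p : Submodule k M) [FiniteDimensional k p] :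
    Module.finrank k (p.map f) + Module.finrank k (LinearMap.ker f ⊓ p : Submodule k M)
      = Module.finrank k p := by
  rw [← LinearMap.finrank_range_add_finrank_ker (f.domRestrict p), LinearMap.range_domRestrict,
    LinearMap.ker_domRestrict, inf_comm,
    ← (Submodule.comapSubtypeEquivOfLe (inf_le_left (b := LinearMap.ker f))).finrank_eq,
    Submodule.comap_inf, Submodule.comap_subtype_self, top_inf_eq]

end Dimension

section Reduction

variable {k G V : Type} [Field k] [Group G] [AddCommGroup V] [Module k V]
  {ρ : Representation k G V} {R : Submodule k (V ⊗[k] V)}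
  {lam lam' : MonoidAlgebra k G ⊗[k] V →ₗ[k] MonoidAlgebra k G}
  {α α' : R →ₗ[k] V ⊗[k] MonoidAlgebra k G} {β β' : R →ₗ[k] MonoidAlgebra k G}

variable (ρ lam α β) in
lemma relations_succ_le (n : ℕ) : relations ρ lam α β (n + 1) ≤ relations ρ lam α β n ⊔
    ⨆ i, (relPiece G R (n + 1) i).map (liftRel ρ lam α β i (n + 1)) := by
  induction n with
  | zero => exact bot_le
  | succ n ih =>
    let S := relations ρ lam α β (n + 1) ⊔
      ⨆ i, (relPiece G R (n + 2) i).map (liftRel ρ lam α β i (n + 2))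
    have mem_of_relPiece : ∀ i, ∀ w ∈ relPiece G R (n + 2) i, liftRel ρ lam α β i (n + 2) w ∈ S :=
      fun i _ hw ↦ Submodule.mem_sup_right
        (Submodule.mem_iSup_of_mem i (Submodule.mem_map_of_mem hw))
    refine relations_add_two_le (fun r m hm ↦ ?_) (fun v m hm ↦ ?_)
    · refine filtration_le (S := S.comap (relator (opG ρ lam) (opV k G V) α β r))
        (fun j hj u ↦ ?_) hm
      rcases hj.lt_or_eq with hj | rfl
      · obtain ⟨n, rfl⟩ : ∃ p, n = p + 1 := ⟨n - 1, by lia⟩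
        exact Submodule.mem_sup_left (relator_mem_relations r (incl_mem_filtration (by lia) u))
      · rw [Submodule.mem_comap, ← liftRel_zero]
        exact mem_of_relPiece 0 _
          (Submodule.mem_map_of_mem (tmul_mem_tensorSubmodule r.2 Submodule.mem_top))
    · refine (ih.trans (sup_le (fun m hm ↦ ?_) (iSup_le fun i ↦ ?_)) :
        _ ≤ S.comap (opV k G V v)) hm
      · exact Submodule.mem_sup_left (opV_mem_relations v hm)
      · rintro _ ⟨w, hw, rfl⟩
        rw [Submodule.mem_comap, ← liftRel_succ]
        exact mem_of_relPiece (i + 1) _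
          (Submodule.mem_map_of_mem (tmul_mem_tensorSubmodule Submodule.mem_top hw))

lemma proj_liftRel {n i : ℕ} {w : Piece k G V (n + 1)} (hw : w ∈ relPiece G R (n + 1) i) :
    proj k G V (n + 1) (liftRel ρ lam α β i (n + 1) w) = w := by
  have := proj_eq_zero_of_mem_filtration n.lt_succ_self
    (incl_sub_liftRel_mem_filtration (ρ := ρ) (lam := lam) (α := α) (β := β) hw)
  rw [map_sub, proj_incl, sub_eq_zero] at this
  exact this.symm

variable (ρ lam α β) in
lemma map_proj_relations_succ (n : ℕ) :
    (relations ρ lam α β (n + 1)).map (proj k G V (n + 1)) = ⨆ i, relPiece G R (n + 1) i := by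
  refine le_antisymm ?_ (iSup_le fun i w hw ↦ ⟨_, liftRel_mem_relations hw, proj_liftRel hw⟩)
  rw [Submodule.map_le_iff_le_comap]
  refine (relations_succ_le ρ lam α β n).trans (sup_le (fun m hm ↦ ?_) (iSup_le fun i ↦ ?_))
  · rw [Submodule.mem_comap,
      proj_eq_zero_of_mem_filtration n.lt_succ_self (relations_le_filtration n hm)]
    exact zero_mem _
  · rintro _ ⟨w, hw, rfl⟩
    rw [Submodule.mem_comap, proj_liftRel hw]
    exact Submodule.mem_iSup_of_mem i hw

variable {hR : ∀ (g : G), ∀ x ∈ R, TensorProduct.map (ρ g) (ρ g) x ∈ R}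

/-- Koszulness enters here: the lifts `liftRel i` agree on overlaps modulo `relations n`, hence they
glue to one map, which retracts `relations (n + 1)` onto its leading terms. -/
theorem relations_succ_inf_filtration_le (hK : IsKoszul k V R) (hc : PBWConditions ρ hR lam α β)
    (n : ℕ) : relations ρ lam α β (n + 1) ⊓ filtration k G V n ≤ relations ρ lam α β n := by
  let J := relations ρ lam α β n
  obtain ⟨F, hF⟩ := hK.exists_linearMap_eq (G := G) (n := n)
    (fun i ↦ J.mkQ ∘ₗ (incl k G V (n + 1) - liftRel ρ lam α β i (n + 1))) (by
      intro i j hij w hw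
      rw [← sub_eq_zero, LinearMap.comp_apply, LinearMap.comp_apply, ← map_sub,
        LinearMap.sub_apply, LinearMap.sub_apply, sub_sub_sub_cancel_left, Submodule.mkQ_apply,
        Submodule.Quotient.mk_eq_zero, ← neg_mem_iff, neg_sub]
      exact liftRel_sub_liftRel_mem_relations hc hij hw)
  -- Replace the degree `n + 1` component of an element by its reduction under `F`.
  let reduce : FreeMod k G V →ₗ[k] FreeMod k G V ⧸ J :=
    J.mkQ ∘ₗ (.id - incl k G V (n + 1) ∘ₗ proj k G V (n + 1)) + F ∘ₗ proj k G V (n + 1)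
  have reduce_of_mem : ∀ m ∈ filtration k G V n, reduce m = J.mkQ m := fun m hm ↦ by
    simp [reduce, proj_eq_zero_of_mem_filtration n.lt_succ_self hm]
  have reduce_incl : ∀ u, reduce (incl k G V (n + 1) u) = F u := fun u ↦ by simp [reduce]
  have reduce_relations : relations ρ lam α β (n + 1) ≤ LinearMap.ker reduce := by
    refine (relations_succ_le ρ lam α β n).trans (sup_le (fun m hm ↦ ?_) (iSup_le fun i ↦ ?_))
    · rw [LinearMap.mem_ker, reduce_of_mem _ (relations_le_filtration n hm)]
      exact (Submodule.Quotient.mk_eq_zero _).mpr hm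
    · rintro _ ⟨w, hw, rfl⟩
      have := reduce_of_mem _ (incl_sub_liftRel_mem_filtration (ρ := ρ) (lam := lam) (α := α)
        (β := β) hw)
      rwa [map_sub, reduce_incl, hF i w hw, LinearMap.comp_apply, LinearMap.sub_apply,
        sub_eq_self] at this
  rintro m ⟨hm, hmn⟩
  rw [← Submodule.Quotient.mk_eq_zero J, ← Submodule.mkQ_apply, ← reduce_of_mem m hmn]
  exact reduce_relations hm

lemma relations_inf_filtration_le (hK : IsKoszul k V R) (hc : PBWConditions ρ hR lam α β)
    (N n : ℕ) : relations ρ lam α β N ⊓ filtration k G V n ≤ relations ρ lam α β n := by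
  induction N with
  | zero => exact inf_le_left.trans (relations_mono n.zero_le)
  | succ N ih =>
    rcases Nat.lt_or_ge N n with h | h
    · exact inf_le_left.trans (relations_mono h)
    · refine le_trans (le_inf ?_ inf_le_right) ih
      exact (inf_le_inf_left _ (filtration_mono h)).trans (relations_succ_inf_filtration_le hK hc N)

variable [Finite G] [FiniteDimensional k V]

lemma finrank_relations_succ (hK : IsKoszul k V R) (hc : PBWConditions ρ hR lam α β) (n : ℕ) :
    Module.finrank k (relations ρ lam α β (n + 1)) = Module.finrank k (relations ρ lam α β n) +
      Module.finrank k (⨆ i, relPiece G R (n + 1) i : Submodule k (Piece k G V (n + 1))) := by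
  have : FiniteDimensional k (relations ρ lam α β (n + 1)) :=
    Submodule.finiteDimensional_of_le (relations_le_filtration (n + 1))
  have ker_inf : LinearMap.ker (proj k G V (n + 1)) ⊓ relations ρ lam α β (n + 1)
      = relations ρ lam α β n :=
    le_antisymm
      (fun m hm ↦ relations_succ_inf_filtration_le hK hc n
        ⟨hm.2, mem_filtration_of_proj_eq_zero (relations_le_filtration _ hm.2) hm.1⟩)
      fun m hm ↦ ⟨proj_eq_zero_of_mem_filtration n.lt_succ_self (relations_le_filtration n hm),
        relations_le_succ n hm⟩
  rw [← finrank_map_add_finrank_ker_inf (proj k G V (n + 1)) (relations ρ lam α β (n + 1)),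
    map_proj_relations_succ, ker_inf, add_comm]

lemma finrank_relations_eq (hK : IsKoszul k V R) (hc : PBWConditions ρ hR lam α β)
    (hc' : PBWConditions ρ hR lam' α' β') (n : ℕ) :
    Module.finrank k (relations ρ lam α β n) = Module.finrank k (relations ρ lam' α' β' n) := by
  induction n with
  | zero => rfl
  | succ n ih => rw [finrank_relations_succ hK hc, finrank_relations_succ hK hc', ih]

end Reduction

section Intertwining

variable {k G V : Type} [Field k] [AddCommGroup V] [Module k V]
  {P Q A : Type*} [AddCommGroup P] [Module k P] [Ring A] [Algebra k A]
  [AddCommGroup Q] [Module k Q] [Module A Q] {f : P →ₗ[k] Q}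

lemma map_mulTensor_apply {M N : Type*} [AddCommGroup M] [Module k M] [AddCommGroup N] [Module k N]
    {a : M →ₗ[k] Module.End k P} {b : N →ₗ[k] Module.End k P} {a' : M →ₗ[k] A} {b' : N →ₗ[k] A}
    (ha : ∀ x m, f (a x m) = a' x • f m) (hb : ∀ y m, f (b y m) = b' y • f m)
    (t : M ⊗[k] N) (m : P) : f ((a ⊙ b) t m) = (a' ⊙ b') t • f m := by
  induction t using TensorProduct.induction_on with
  | zero => simp
  | add s t hs ht => simp only [map_add, LinearMap.add_apply, hs, ht, add_smul]
  | tmul x y => simp only [mulTensor_tmul, Module.End.mul_apply, ha, hb, mul_smul]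

variable {a : MonoidAlgebra k G →ₗ[k] Module.End k P} {b : V →ₗ[k] Module.End k P}
  {a' : MonoidAlgebra k G →ₗ[k] A} {b' : V →ₗ[k] A}
  (ha : ∀ x m, f (a x m) = a' x • f m) (hb : ∀ v m, f (b v m) = b' v • f m)
include ha hb

lemma map_relator_apply {R : Submodule k (V ⊗[k] V)} (α : R →ₗ[k] V ⊗[k] MonoidAlgebra k G)
    (β : R →ₗ[k] MonoidAlgebra k G) (r : R) (m : P) :
    f (relator a b α β r m) = relator a' b' α β r • f m := by
  simp only [relator_apply, lowerTerm_apply, LinearMap.sub_apply, LinearMap.add_apply, map_sub,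
    map_add, sub_smul, add_smul, map_mulTensor_apply hb hb, map_mulTensor_apply hb ha, ha]

lemma IsTwistedPair.descend [Group G] {ρ : Representation k G V}
    {lam : MonoidAlgebra k G ⊗[k] V →ₗ[k] MonoidAlgebra k G} [FaithfulSMul A Q]
    (hf : Function.Surjective f) (h : IsTwistedPair ρ lam a b) : IsTwistedPair ρ lam a' b' where
  map_one := eq_of_smul_eq_smul (α := Q) <| hf.forall.mpr fun m ↦ by
    rw [← ha, h.map_one, Module.End.one_apply, one_smul]
  map_mul x y := eq_of_smul_eq_smul (α := Q) <| hf.forall.mpr fun m ↦ by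
    rw [mul_smul, ← ha, ← ha, ← ha, h.map_mul, Module.End.mul_apply]
  act g v := eq_of_smul_eq_smul (α := Q) <| hf.forall.mpr fun m ↦ by
    rw [mul_smul, add_smul, mul_smul, ← hb, ← ha, ← ha, ← hb, ← ha, ← map_add]
    exact congrArg f (LinearMap.congr_fun (h.act g v) m)

end Intertwining

section WordMap

variable {k G V : Type} [Field k] [AddCommGroup V] [Module k V]
  {A : Type*} [Ring A] [Algebra k A] (a : MonoidAlgebra k G →ₗ[k] A) (b : V →ₗ[k] A)

/-- The restriction of `wordMap` to the degree-`n` piece. -/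
def wordPiece : (n : ℕ) → Piece k G V n →ₗ[k] A
  | 0 => a ∘ₗ (pieceZero k G V).symm.toLinearMap
  | n + 1 => (b ⊙ wordPiece n) ∘ₗ (pieceSucc k G V n).symm.toLinearMap

/-- The evaluation `v₁ ⊗ ⋯ ⊗ vₙ ⊗ x ↦ b v₁ * ⋯ * b vₙ * a x` of normal words in an algebra. -/
def wordMap : FreeMod k G V →ₗ[k] A := DirectSum.toModule k ℕ A (wordPiece a b)

lemma wordMap_incl (n : ℕ) (u : Piece k G V n) :
    wordMap a b (incl k G V n u) = wordPiece a b n u := by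
  simp [wordMap, incl, DirectSum.toModule_lof]

lemma wordMap_incl_zero (x : MonoidAlgebra k G) :
    wordMap a b (incl k G V 0 (pieceZero k G V x)) = a x := by
  simp [wordMap_incl, wordPiece]

lemma wordMap_opV (v : V) (m : FreeMod k G V) :
    wordMap a b (opV k G V v m) = b v * wordMap a b m := by
  induction m using DirectSum.induction_on with
  | zero => simp
  | add x y hx hy => simp only [map_add, hx, hy, mul_add]
  | of n u =>
    change wordMap a b (opV k G V v (incl k G V n u)) = b v * wordMap a b (incl k G V n u)
    simp [opV_incl, wordMap_incl, wordPiece]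

lemma range_mul_map_filtration_le (n : ℕ) :
    LinearMap.range b * (filtration k G V n).map (wordMap a b)
      ≤ (filtration k G V (n + 1)).map (wordMap a b) := by
  rw [Submodule.mul_le]
  rintro _ ⟨v, rfl⟩ _ ⟨m, hm, rfl⟩
  exact ⟨_, opV_mem_filtration v hm, wordMap_opV a b v m⟩

variable {a b} [Group G] {ρ : Representation k G V}
  {lam : MonoidAlgebra k G ⊗[k] V →ₗ[k] MonoidAlgebra k G} (h : IsTwistedPair ρ lam a b)
include h

lemma IsTwistedPair.wordMap_opG (x : MonoidAlgebra k G) (m : FreeMod k G V) :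
    wordMap a b (opG ρ lam x m) = a x * wordMap a b m := by
  induction m using FreeMod.induction generalizing x with
  | zero => simp
  | add m m' hm hm' => simp only [map_add, hm, hm', mul_add]
  | base y => rw [opG_incl_zero, wordMap_incl_zero, wordMap_incl_zero, h.map_mul]
  | opV v m hm =>
    induction x using MonoidAlgebra.induction_on with
    | of g =>
      rw [opG_opV, map_add, wordMap_opV, wordMap_opV, hm, hm, ← mul_assoc, ← mul_assoc, h.act,
        add_mul]
    | add x y hx hy => simp only [map_add, LinearMap.add_apply, hx, hy, add_mul]
    | smul c x hx => simp only [map_smul, LinearMap.smul_apply, hx, smul_mul_assoc]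

lemma IsTwistedPair.relations_le_ker_wordMap {R : Submodule k (V ⊗[k] V)}
    {α : R →ₗ[k] V ⊗[k] MonoidAlgebra k G} {β : R →ₗ[k] MonoidAlgebra k G}
    (hrel : relator a b α β = 0) : ∀ n, relations ρ lam α β n ≤ LinearMap.ker (wordMap a b)
  | 0 | 1 => bot_le
  | n + 2 => relations_add_two_le
      (fun r m _ ↦ by
        rw [LinearMap.mem_ker, map_relator_apply (A := A) h.wordMap_opG (wordMap_opV a b), hrel,
          LinearMap.zero_apply, zero_smul])
      fun v m hm ↦ by
        rw [LinearMap.mem_ker, wordMap_opV, relations_le_ker_wordMap hrel (n + 1) hm, mul_zero]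

lemma IsTwistedPair.range_mul_map_filtration_le (n : ℕ) :
    LinearMap.range a * (filtration k G V n).map (wordMap a b)
      ≤ (filtration k G V n).map (wordMap a b) := by
  rw [Submodule.mul_le]
  rintro _ ⟨x, rfl⟩ _ ⟨m, hm, rfl⟩
  exact ⟨_, opG_mem_filtration ρ lam x hm, h.wordMap_opG x m⟩

end WordMap

section DeformedAlgebra

lemma filtT_eq_partialSups {k G V : Type} [Field k] [AddCommGroup V] [Module k V] (n : ℕ) :
    filtT k G V n = partialSups (grT k G V) n := by
  induction n with
  | zero => rfl
  | succ n ih => rw [filtT, ih, ← partialSups_add_one]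

variable {k G V : Type} [Field k] [Group G] [AddCommGroup V] [Module k V]
  (ρ : Representation k G V) {R : Submodule k (V ⊗[k] V)}
  (lam : MonoidAlgebra k G ⊗[k] V →ₗ[k] MonoidAlgebra k G)
  (α : R →ₗ[k] V ⊗[k] MonoidAlgebra k G) (β : R →ₗ[k] MonoidAlgebra k G)

/-- The canonical map `kG → H_{λ,α,β}`. -/
def gH : MonoidAlgebra k G →ₗ[k] HAlg k G V R ρ lam α β :=
  (toH k G V R ρ lam α β).toLinearMap ∘ₗ gIn k G V

/-- The canonical map `V → H_{λ,α,β}`. -/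
def vH : V →ₗ[k] HAlg k G V R ρ lam α β :=
  (toH k G V R ρ lam α β).toLinearMap ∘ₗ vIn k G V

lemma toH_eq_of_rel {x y : FreeAlg k G V} (h : GRel k G V R ρ lam α β x y) :
    toH k G V R ρ lam α β x = toH k G V R ρ lam α β y :=
  RingQuot.mkAlgHom_rel k h

lemma isTwistedPair_gH_vH : IsTwistedPair ρ lam (gH ρ lam α β) (vH ρ lam α β) where
  map_one := (toH_eq_of_rel ρ lam α β .unit).trans (map_one _)
  map_mul x y := (toH_eq_of_rel ρ lam α β (.gmul x y)).symm.trans (map_mul _ _ _)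
  act g v := by
    have := toH_eq_of_rel ρ lam α β (.act g v)
    rwa [map_mul, map_add, map_mul] at this

lemma relator_gH_vH : relator (gH ρ lam α β) (vH ρ lam α β) α β = 0 := by
  rw [gH, vH, ← algHom_comp_relator]
  exact LinearMap.ext fun r ↦ (map_sub _ _ _).trans
    (sub_eq_zero.mpr (toH_eq_of_rel ρ lam α β (.quad r)))

lemma exists_algHom_of_isTwistedPair {A : Type*} [Ring A] [Algebra k A]
    {a : MonoidAlgebra k G →ₗ[k] A} {b : V →ₗ[k] A} (h : IsTwistedPair ρ lam a b)
    (hrel : relator a b α β = 0) : ∃ Φ : HAlg k G V R ρ lam α β →ₐ[k] A,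
      (∀ x, Φ (gH ρ lam α β x) = a x) ∧ ∀ v, Φ (vH ρ lam α β v) = b v := by
  let φ : FreeAlg k G V →ₐ[k] A := TensorAlgebra.lift k (a.coprod b)
  have φ_gIn : φ.toLinearMap ∘ₗ gIn k G V = a := by ext; simp [φ, gIn]
  have φ_vIn : φ.toLinearMap ∘ₗ vIn k G V = b := by ext; simp [φ, vIn]
  have φ_gIn_apply x : φ (gIn k G V x) = a x := LinearMap.congr_fun φ_gIn x
  have φ_vIn_apply v : φ (vIn k G V v) = b v := LinearMap.congr_fun φ_vIn v
  have φ_relator (r : R) : φ (relator (gIn k G V) (vIn k G V) α β r) = 0 := by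
    have := algHom_comp_relator (gIn k G V) (vIn k G V) α β φ
    rw [φ_gIn, φ_vIn, hrel] at this
    exact LinearMap.congr_fun this r
  have φ_rel : ∀ ⦃x y⦄, GRel k G V R ρ lam α β x y → φ x = φ y := by
    rintro _ _ (_ | ⟨x, y⟩ | ⟨g, v⟩ | r)
    · rw [φ_gIn_apply, h.map_one, map_one]
    · rw [map_mul, φ_gIn_apply, φ_gIn_apply, φ_gIn_apply, h.map_mul]
    · simp only [map_add, map_mul, φ_gIn_apply, φ_vIn_apply, h.act]
    · exact sub_eq_zero.mp ((map_sub _ _ _).symm.trans (φ_relator r))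
  have lift_toH x : RingQuot.liftAlgHom k ⟨φ, φ_rel⟩ (toH k G V R ρ lam α β x) = φ x :=
    RingQuot.liftAlgHom_mkAlgHom_apply k φ φ_rel x
  exact ⟨_, fun x ↦ (lift_toH _).trans (φ_gIn_apply x), fun v ↦ (lift_toH _).trans (φ_vIn_apply v)⟩

lemma map_grT_zero :
    (grT k G V 0).map (toH k G V R ρ lam α β).toLinearMap = LinearMap.range (gH ρ lam α β) := by
  let f : MonoidAlgebra k G →ₐ[k] HAlg k G V R ρ lam α β :=
    .ofLinearMap (gH ρ lam α β) (isTwistedPair_gH_vH ρ lam α β).map_one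
      (isTwistedPair_gH_vH ρ lam α β).map_mul
  rw [grT]
  refine le_antisymm ?_ ?_
  · have adjoin_le : Algebra.adjoin k (Set.range (gIn k G V))
        ≤ f.range.comap (toH k G V R ρ lam α β) :=
      Algebra.adjoin_le (by rintro _ ⟨x, rfl⟩; exact ⟨x, rfl⟩)
    exact Submodule.map_le_iff_le_comap.mpr adjoin_le
  · rintro _ ⟨x, rfl⟩
    exact ⟨gIn k G V x, Algebra.subset_adjoin (Set.mem_range_self x), rfl⟩

lemma map_grT (n : ℕ) : (grT k G V n).map (toH k G V R ρ lam α β).toLinearMap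
    = LinearMap.range (gH ρ lam α β)
      * (LinearMap.range (vH ρ lam α β) * LinearMap.range (gH ρ lam α β)) ^ n := by
  induction n with
  | zero => rw [map_grT_zero, pow_zero, mul_one]
  | succ n ih =>
    rw [grT, Submodule.map_mul, Submodule.map_mul, ih, map_grT_zero, ← LinearMap.range_comp,
      pow_succ, mul_assoc]
    rfl

lemma one_le_range_gH : 1 ≤ LinearMap.range (gH ρ lam α β) :=
  Submodule.one_le.mpr ⟨1, (isTwistedPair_gH_vH ρ lam α β).map_one⟩

lemma map_grT_le (n : ℕ) : (grT k G V n).map (toH k G V R ρ lam α β).toLinearMap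
    ≤ (filtration k G V n).map (wordMap (gH ρ lam α β) (vH ρ lam α β)) := by
  have h := isTwistedPair_gH_vH ρ lam α β
  suffices hpow : (LinearMap.range (vH ρ lam α β) * LinearMap.range (gH ρ lam α β)) ^ n
      ≤ (filtration k G V n).map (wordMap (gH ρ lam α β) (vH ρ lam α β)) by
    rw [map_grT]
    exact (mul_le_mul_right hpow _).trans (h.range_mul_map_filtration_le n)
  induction n with
  | zero =>
    rw [pow_zero, Submodule.one_le]
    exact ⟨_, incl_mem_filtration le_rfl _, (wordMap_incl_zero _ _ 1).trans h.map_one⟩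
  | succ n ih =>
    rw [pow_succ', mul_assoc]
    exact (mul_le_mul_right ((mul_le_mul_right ih _).trans (h.range_mul_map_filtration_le n))
      _).trans (range_mul_map_filtration_le _ _ n)

lemma wordMap_incl_mem_map_grT (n : ℕ) (u : Piece k G V n) :
    wordMap (gH ρ lam α β) (vH ρ lam α β) (incl k G V n u)
      ∈ (grT k G V n).map (toH k G V R ρ lam α β).toLinearMap := by
  have one_mul_le (S : Submodule k (HAlg k G V R ρ lam α β)) :
      S ≤ LinearMap.range (gH ρ lam α β) * S := by
    simpa using mul_le_mul_left (one_le_range_gH ρ lam α β) S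
  induction n with
  | zero =>
    obtain ⟨x, rfl⟩ := (pieceZero k G V).surjective u
    rw [wordMap_incl_zero, map_grT_zero]
    exact ⟨x, rfl⟩
  | succ n ih =>
    induction u using Piece.succ_induction with
    | zero => simp
    | add x y hx hy => rw [map_add, map_add]; exact add_mem hx hy
    | tmul v u =>
      have mem := Submodule.mul_mem_mul (LinearMap.mem_range_self (vH ρ lam α β) v) (ih u)
      rw [← opV_incl, wordMap_opV, map_grT]
      rw [map_grT, ← mul_assoc, ← pow_succ'] at mem
      exact one_mul_le _ mem

lemma filtH_eq_map_wordMap (d : ℕ) : filtH k G V R ρ lam α β d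
    = (filtration k G V d).map (wordMap (gH ρ lam α β) (vH ρ lam α β)) := by
  rw [filtH, filtT_eq_partialSups]
  refine le_antisymm (Submodule.map_le_iff_le_comap.mpr (partialSups_le _ _ _ fun j hj ↦ ?_))
    (Submodule.map_le_iff_le_comap.mpr (filtration_le fun j hj u ↦ ?_))
  · exact Submodule.map_le_iff_le_comap.mp
      ((map_grT_le ρ lam α β j).trans (Submodule.map_mono (filtration_mono hj)))
  · exact Submodule.map_mono (le_partialSups_of_le _ hj) (wordMap_incl_mem_map_grT ρ lam α β j u)

lemma finrank_filtH_add [Finite G] [FiniteDimensional k V] (d : ℕ) :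
    Module.finrank k (filtH k G V R ρ lam α β d)
      + Module.finrank k (LinearMap.ker (wordMap (gH ρ lam α β) (vH ρ lam α β))
        ⊓ filtration k G V d : Submodule k (FreeMod k G V))
      = Module.finrank k (filtration k G V d) := by
  rw [filtH_eq_map_wordMap, finrank_map_add_finrank_ker_inf]

end DeformedAlgebra

section Sufficiency

variable {k G V : Type} [Field k] [Group G] [AddCommGroup V] [Module k V]
  {ρ : Representation k G V} {R : Submodule k (V ⊗[k] V)}
  {hR : ∀ (g : G), ∀ x ∈ R, TensorProduct.map (ρ g) (ρ g) x ∈ R}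
  {lam : MonoidAlgebra k G ⊗[k] V →ₗ[k] MonoidAlgebra k G}
  {α : R →ₗ[k] V ⊗[k] MonoidAlgebra k G} {β : R →ₗ[k] MonoidAlgebra k G}

lemma mem_iSup_relations {m : FreeMod k G V} :
    m ∈ ⨆ n, relations ρ lam α β n ↔ ∃ n, m ∈ relations ρ lam α β n :=
  Submodule.mem_iSup_of_directed _ relations_mono.directed_le

/-- The quotient of `T(V) ⊗ kG` by all relations is a module over `H_{λ,α,β}`; acting on the class
of `1` inverts `wordMap`. -/
lemma exists_mem_relations_of_wordMap_eq_zero (hc : PBWConditions ρ hR lam α β)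
    {m : FreeMod k G V} (hm : wordMap (gH ρ lam α β) (vH ρ lam α β) m = 0) :
    ∃ n, m ∈ relations ρ lam α β n := by
  let J := ⨆ n, relations ρ lam α β n
  have opG_mem (x) : opG ρ lam x ∈ Submodule.compatibleMaps J J := fun m hm ↦ by
    obtain ⟨n, hn⟩ := mem_iSup_relations.mp hm
    exact mem_iSup_relations.mpr ⟨n, opG_mem_relations hc x hn⟩
  have opV_mem (v) : opV k G V v ∈ Submodule.compatibleMaps J J := fun m hm ↦ by
    obtain ⟨n, hn⟩ := mem_iSup_relations.mp hm
    exact mem_iSup_relations.mpr ⟨n + 1, opV_mem_relations v hn⟩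
  let a : MonoidAlgebra k G →ₗ[k] Module.End k (FreeMod k G V ⧸ J) :=
    Submodule.mapQLinear J J ∘ₗ (opG ρ lam).codRestrict _ opG_mem
  let b : V →ₗ[k] Module.End k (FreeMod k G V ⧸ J) :=
    Submodule.mapQLinear J J ∘ₗ (opV k G V).codRestrict _ opV_mem
  have ha : ∀ x m, J.mkQ (opG ρ lam x m) = a x • J.mkQ m := fun _ _ ↦ rfl
  have hb : ∀ v m, J.mkQ (opV k G V v m) = b v • J.mkQ m := fun _ _ ↦ rfl
  have twisted : IsTwistedPair ρ lam a b :=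
    .descend ha hb J.mkQ_surjective (isTwistedPair_opG_opV hc.lam_mul)
  have relator_eq_zero : relator a b α β = 0 := LinearMap.ext fun r ↦ LinearMap.ext fun q ↦ by
    obtain ⟨m, rfl⟩ := J.mkQ_surjective q
    obtain ⟨n, hn⟩ := exists_mem_filtration m
    refine (map_relator_apply ha hb α β r m).symm.trans ((Submodule.Quotient.mk_eq_zero J).mpr ?_)
    exact mem_iSup_relations.mpr ⟨n + 2, relator_mem_relations r hn⟩
  obtain ⟨Φ, hΦG, hΦV⟩ := exists_algHom_of_isTwistedPair ρ lam α β twisted relator_eq_zero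
  have act_one : ∀ m, Φ (wordMap (gH ρ lam α β) (vH ρ lam α β) m)
      • J.mkQ (incl k G V 0 (pieceZero k G V 1)) = J.mkQ m := fun m ↦ by
    induction m using FreeMod.induction with
    | zero => simp
    | add x y hx hy => rw [map_add, map_add, map_add, add_smul, hx, hy]
    | base x => rw [wordMap_incl_zero, hΦG, ← ha, opG_incl_zero, mul_one]
    | opV v m hm => rw [wordMap_opV, map_mul, hΦV, mul_smul, hm, ← hb]
  have := act_one m
  rw [hm, map_zero, zero_smul] at this
  exact mem_iSup_relations.mp ((Submodule.Quotient.mk_eq_zero J).mp this.symm)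

lemma ker_wordMap_inf_filtration (hK : IsKoszul k V R) (hc : PBWConditions ρ hR lam α β) (d : ℕ) :
    LinearMap.ker (wordMap (gH ρ lam α β) (vH ρ lam α β)) ⊓ filtration k G V d
      = relations ρ lam α β d := by
  refine le_antisymm ?_ (le_inf ?_ (relations_le_filtration d))
  · rintro m ⟨hm, hmd⟩
    obtain ⟨n, hn⟩ := exists_mem_relations_of_wordMap_eq_zero hc hm
    exact relations_inf_filtration_le hK hc n d ⟨hn, hmd⟩
  · exact (isTwistedPair_gH_vH ρ lam α β).relations_le_ker_wordMap (relator_gH_vH ρ lam α β) d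

theorem PBWConditions.isPBW [Finite G] [FiniteDimensional k V] (hc : PBWConditions ρ hR lam α β)
    (hK : IsKoszul k V R) : IsPBW k G V R ρ lam α β := by
  intro d
  have hH := finrank_filtH_add ρ lam α β d
  have hS := finrank_filtH_add ρ 0 (0 : R →ₗ[k] V ⊗[k] MonoidAlgebra k G) 0 d
  rw [ker_wordMap_inf_filtration hK hc, finrank_relations_eq hK hc (.zero ρ hR)] at hH
  rw [ker_wordMap_inf_filtration hK (.zero ρ hR)] at hS
  lia

end Sufficiency

section LowDegree

variable {k G V : Type} [Field k] [AddCommGroup V] [Module k V]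

variable (k G V) in
/-- The identification of `V ⊗ kG` with `Piece k G V 1`. -/
def pieceOne : V ⊗[k] MonoidAlgebra k G ≃ₗ[k] Piece k G V 1 :=
  (TensorProduct.congr (.refl k V) (pieceZero k G V)).trans (pieceSucc k G V 0)

variable (k G V) in
/-- The identification of `V ⊗ (V ⊗ kG)` with `Piece k G V 2`. -/
def pieceTwo : V ⊗[k] (V ⊗[k] MonoidAlgebra k G) ≃ₗ[k] Piece k G V 2 :=
  (TensorProduct.congr (.refl k V) (pieceOne k G V)).trans (pieceSucc k G V 1)

variable (k G V) in
/-- The element of `T(V) ⊗ kG` with components `t`, `s`, `x` in degrees two, one and zero. -/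
def lowDegree : (V ⊗[k] (V ⊗[k] MonoidAlgebra k G)) × (V ⊗[k] MonoidAlgebra k G) ×
    MonoidAlgebra k G →ₗ[k] FreeMod k G V :=
  (incl k G V 2 ∘ₗ (pieceTwo k G V).toLinearMap).coprod
    ((incl k G V 1 ∘ₗ (pieceOne k G V).toLinearMap).coprod
      (incl k G V 0 ∘ₗ (pieceZero k G V).toLinearMap))

lemma pieceTwo_assoc_tmul (t : V ⊗[k] V) (x : MonoidAlgebra k G) :
    pieceTwo k G V (TensorProduct.assoc k V V _ (t ⊗ₜ x))
      = pieceAddTwo k G V 0 (t ⊗ₜ pieceZero k G V x) := by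
  induction t using TensorProduct.induction_on with
  | zero => simp
  | add s t hs ht => simp only [add_tmul, map_add, hs, ht]
  | tmul v w => simp [pieceTwo, pieceOne, pieceAddTwo]

lemma lowDegree_mk (t : V ⊗[k] (V ⊗[k] MonoidAlgebra k G)) (s : V ⊗[k] MonoidAlgebra k G)
    (x : MonoidAlgebra k G) : lowDegree k G V (t, s, x)
      = incl k G V 2 (pieceTwo k G V t)
        + (incl k G V 1 (pieceOne k G V s) + incl k G V 0 (pieceZero k G V x)) := rfl

lemma lowDegree_injective : Function.Injective (lowDegree k G V) := by
  rw [injective_iff_map_eq_zero]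
  rintro ⟨t, s, x⟩ h
  rw [lowDegree_mk] at h
  have h₂ := congrArg (proj k G V 2) h
  have h₁ := congrArg (proj k G V 1) h
  have h₀ := congrArg (proj k G V 0) h
  simp only [map_add, proj_incl, map_zero, proj_incl_of_ne, ne_eq, OfNat.ofNat_ne_zero,
    OfNat.ofNat_ne_one, OfNat.one_ne_ofNat, OfNat.zero_ne_ofNat, one_ne_zero, zero_ne_one,
    not_false_eq_true, add_zero, zero_add, LinearEquiv.map_eq_zero_iff] at h₀ h₁ h₂
  rw [h₀, h₁, h₂]
  rfl

lemma lowDegree_mem_filtration (p) : lowDegree k G V p ∈ filtration k G V 2 :=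
  add_mem (incl_mem_filtration le_rfl _)
    (add_mem (incl_mem_filtration one_le_two _) (incl_mem_filtration zero_le_two _))

section WordMap

variable {A : Type*} [Ring A] [Algebra k A] (a : MonoidAlgebra k G →ₗ[k] A) (b : V →ₗ[k] A)

lemma wordMap_pieceOne (s : V ⊗[k] MonoidAlgebra k G) :
    wordMap a b (incl k G V 1 (pieceOne k G V s)) = (b ⊙ a) s := by
  induction s using TensorProduct.induction_on with
  | zero => simp
  | add s t hs ht => simp only [map_add, hs, ht]
  | tmul v x =>
    have : pieceOne k G V (v ⊗ₜ x) = pieceSucc k G V 0 (v ⊗ₜ pieceZero k G V x) := by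
      simp [pieceOne]
    rw [this, ← opV_incl, wordMap_opV, wordMap_incl_zero, mulTensor_tmul]

lemma wordMap_pieceTwo (t : V ⊗[k] (V ⊗[k] MonoidAlgebra k G)) :
    wordMap a b (incl k G V 2 (pieceTwo k G V t)) = (b ⊙ (b ⊙ a)) t := by
  induction t using TensorProduct.induction_on with
  | zero => simp
  | add s t hs ht => simp only [map_add, hs, ht]
  | tmul v s =>
    have : pieceTwo k G V (v ⊗ₜ s) = pieceSucc k G V 1 (v ⊗ₜ pieceOne k G V s) := by
      simp [pieceTwo]
    rw [this, ← opV_incl, wordMap_opV, wordMap_pieceOne, mulTensor_tmul]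

lemma wordMap_lowDegree (t : V ⊗[k] (V ⊗[k] MonoidAlgebra k G)) (s : V ⊗[k] MonoidAlgebra k G)
    (x : MonoidAlgebra k G) :
    wordMap a b (lowDegree k G V (t, s, x)) = (b ⊙ (b ⊙ a)) t + ((b ⊙ a) s + a x) := by
  rw [lowDegree_mk, map_add, map_add, wordMap_pieceTwo, wordMap_pieceOne, wordMap_incl_zero]

end WordMap

variable {R : Submodule k (V ⊗[k] V)}

variable (R) in
lemma inclRG_injective : Function.Injective (inclRG k G V R) :=
  (TensorProduct.assoc k V V (MonoidAlgebra k G)).injective.comp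
    (Module.Flat.rTensor_preserves_injective_linearMap R.subtype R.injective_subtype)

end LowDegree

section QuadraticRelations

variable {k G V : Type} [Field k] [Group G] [AddCommGroup V] [Module k V]
  {ρ : Representation k G V} {R : Submodule k (V ⊗[k] V)}
  {lam : MonoidAlgebra k G ⊗[k] V →ₗ[k] MonoidAlgebra k G}
  (α : R →ₗ[k] V ⊗[k] MonoidAlgebra k G) (β : R →ₗ[k] MonoidAlgebra k G)

/-- The relation `(r - α(r) - β(r)) x` of `H_{λ,α,β}` in terms of normal words. -/
def normalRelation : R ⊗[k] MonoidAlgebra k G →ₗ[k] FreeMod k G V :=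
  lowDegree k G V ∘ₗ (inclRG k G V R).prod ((-αext k G V R α).prod (-βext k G V R β))

lemma normalRelation_injective : Function.Injective (normalRelation α β) := fun _ _ h ↦
  inclRG_injective R (congrArg Prod.fst (lowDegree_injective h))

lemma IsTwistedPair.wordMap_normalRelation {A : Type*} [Ring A] [Algebra k A]
    {a : MonoidAlgebra k G →ₗ[k] A} {b : V →ₗ[k] A} (h : IsTwistedPair ρ lam a b)
    (y : R ⊗[k] MonoidAlgebra k G) :
    wordMap a b (normalRelation α β y) = (relator a b α β ⊙ a) y := by
  have := wordMap_lowDegree a b (inclRG k G V R y) (-αext k G V R α y) (-βext k G V R β y)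
  refine this.trans ?_
  rw [relator, mulTensor_sub_left, quadratic_mulTensor_groupAlgebra,
    h.lowerTerm_mulTensor_groupAlgebra]
  simp only [LinearMap.sub_apply, LinearMap.add_apply, LinearMap.comp_apply, map_neg]
  abel

variable (ρ lam) in
lemma range_normalRelation_le : LinearMap.range (normalRelation α β)
    ≤ LinearMap.ker (wordMap (gH ρ lam α β) (vH ρ lam α β)) ⊓ filtration k G V 2 := by
  rintro _ ⟨y, rfl⟩
  refine ⟨?_, lowDegree_mem_filtration _⟩
  rw [SetLike.mem_coe, LinearMap.mem_ker, (isTwistedPair_gH_vH ρ lam α β).wordMap_normalRelation,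
    relator_gH_vH, mulTensor, TensorProduct.map_zero_left, LinearMap.comp_zero,
    LinearMap.zero_apply]

variable (ρ R) in
lemma relations_two_le_range_normalRelation :
    relations ρ 0 (0 : R →ₗ[k] V ⊗[k] MonoidAlgebra k G) 0 2
      ≤ LinearMap.range (normalRelation (G := G) (R := R) 0 0) := by
  refine relations_add_two_le (fun r m hm ↦ ?_) (fun v m hm ↦ ?_)
  · rw [filtration, partialSups_zero] at hm
    obtain ⟨u, rfl⟩ := hm
    obtain ⟨x, rfl⟩ := (pieceZero k G V).surjective u
    refine ⟨r ⊗ₜ x, ?_⟩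
    have hrel : relator (opG ρ 0) (opV k G V) 0 0 r = (opV k G V ⊙ opV k G V) r := by
      simp [relator_apply, lowerTerm_apply]
    have hx : inclRG k G V R (r ⊗ₜ x) = TensorProduct.assoc k V V _ (r ⊗ₜ x) := rfl
    simp [normalRelation, lowDegree_mk, hx, αext, βext, hrel, mulTensor_opV_incl,
      pieceTwo_assoc_tmul]
  · rw [show m = 0 from hm, map_zero]
    exact zero_mem _

variable {α β} {hR : ∀ (g : G), ∀ x ∈ R, TensorProduct.map (ρ g) (ρ g) x ∈ R}
  [Finite G] [FiniteDimensional k V] (hK : IsKoszul k V R) (hp : IsPBW k G V R ρ lam α β)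

include hR hK hp

lemma range_normalRelation : LinearMap.range (normalRelation α β)
    = LinearMap.ker (wordMap (gH ρ lam α β) (vH ρ lam α β)) ⊓ filtration k G V 2 := by
  refine Submodule.eq_of_le_of_finrank_le (range_normalRelation_le ρ lam α β) ?_
  have dim_H := finrank_filtH_add ρ lam α β 2
  have dim_S := finrank_filtH_add ρ 0 (0 : R →ₗ[k] V ⊗[k] MonoidAlgebra k G) 0 2
  rw [ker_wordMap_inf_filtration hK (.zero ρ hR)] at dim_S
  have le_S := (Submodule.finrank_mono (relations_two_le_range_normalRelation (G := G) ρ R)).trans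
    (LinearMap.finrank_range_le _)
  have eq_H := LinearMap.finrank_range_of_inj (normalRelation_injective (G := G) α β)
  have := hp 2
  lia

lemma exists_of_quadratic_eq_zero {t : V ⊗[k] (V ⊗[k] MonoidAlgebra k G)}
    {s : V ⊗[k] MonoidAlgebra k G} {x : MonoidAlgebra k G}
    (h : (vH ρ lam α β ⊙ (vH ρ lam α β ⊙ gH ρ lam α β)) t
      + ((vH ρ lam α β ⊙ gH ρ lam α β) s + gH ρ lam α β x) = 0) :
    ∃ y, inclRG k G V R y = t ∧ αext k G V R α y + s = 0 ∧ βext k G V R β y + x = 0 := by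
  have hm : lowDegree k G V (t, s, x) ∈ LinearMap.range (normalRelation α β) := by
    rw [range_normalRelation (hR := hR) hK hp]
    exact ⟨(wordMap_lowDegree _ _ t s x).trans h, lowDegree_mem_filtration _⟩
  obtain ⟨y, hy⟩ := hm
  obtain ⟨ht, hsx⟩ := Prod.mk.inj (lowDegree_injective hy)
  obtain ⟨hs, hx⟩ := Prod.mk.inj hsx
  exact ⟨y, ht, neg_eq_iff_add_eq_zero.mp hs, neg_eq_iff_add_eq_zero.mp hx⟩

lemma eq_zero_of_linear_eq_zero {s : V ⊗[k] MonoidAlgebra k G} {x : MonoidAlgebra k G}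
    (h : (vH ρ lam α β ⊙ gH ρ lam α β) s + gH ρ lam α β x = 0) : s = 0 ∧ x = 0 := by
  obtain ⟨y, ht, hs, hx⟩ := exists_of_quadratic_eq_zero (hR := hR) hK hp (t := 0) (s := s) (x := x)
    (by rw [map_zero, zero_add, h])
  obtain rfl : y = 0 := inclRG_injective R (ht.trans (map_zero _).symm)
  rw [map_zero, zero_add] at hs hx
  exact ⟨hs, hx⟩

end QuadraticRelations

section Necessity

variable {k G V : Type} [Field k] [Group G] [Finite G] [AddCommGroup V] [Module k V]
  [FiniteDimensional k V] {ρ : Representation k G V} {R : Submodule k (V ⊗[k] V)}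
  {hR : ∀ (g : G), ∀ x ∈ R, TensorProduct.map (ρ g) (ρ g) x ∈ R}
  {lam : MonoidAlgebra k G ⊗[k] V →ₗ[k] MonoidAlgebra k G}
  {α : R →ₗ[k] V ⊗[k] MonoidAlgebra k G} {β : R →ₗ[k] MonoidAlgebra k G}
  (hK : IsKoszul k V R) (hp : IsPBW k G V R ρ lam α β)
include hK hp

include hR in
lemma lam_mul_of_isPBW (g h : G) (v : V) :
    lam ((MonoidAlgebra.of k G g * MonoidAlgebra.of k G h) ⊗ₜ v)
      = MonoidAlgebra.of k G g * lam (MonoidAlgebra.of k G h ⊗ₜ v)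
        + lam (MonoidAlgebra.of k G g ⊗ₜ ρ h v) * MonoidAlgebra.of k G h := by
  have hH := isTwistedPair_gH_vH ρ lam α β
  refine sub_eq_zero.mp (eq_zero_of_linear_eq_zero (hR := hR) hK hp (s := 0) ?_).2
  have assoc := hH.act (g * h) v
  rw [map_mul, hH.map_mul, mul_assoc, hH.act h v, mul_add, ← mul_assoc, hH.act g, add_mul,
    map_mul, Module.End.mul_apply, mul_assoc, add_assoc] at assoc
  rw [map_zero, zero_add, map_sub, map_add, hH.map_mul, hH.map_mul, sub_eq_zero,
    ← add_left_cancel assoc, add_comm]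

lemma mul_relator_of_isPBW (g : G) (r : R) :
    leftAct ρ g (α r)
      - (rightAct (.of k G g) (α (rActR k G V R ρ hR g r)) + correctionVG ρ lam g r) = 0 ∧
    .of k G g * β r + LinearMap.mul' k _ (TensorProduct.map (lamMk k G V lam g) .id (α r))
      - (β (rActR k G V R ρ hR g r) * .of k G g + correctionG lam g r) = 0 := by
  have hH := isTwistedPair_gH_vH ρ lam α β
  have quadratic (r : R) : (vH ρ lam α β ⊙ vH ρ lam α β) r
      = lowerTerm (gH ρ lam α β) (vH ρ lam α β) α β r :=
    sub_eq_zero.mp (LinearMap.congr_fun (relator_gH_vH ρ lam α β) r)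
  refine eq_zero_of_linear_eq_zero (hR := hR) hK hp ?_
  have assoc := hH.mul_mulTensor_VV g r
  have hr : TensorProduct.map (ρ g) (ρ g) r = (rActR k G V R ρ hR g r : V ⊗[k] V) := rfl
  rw [hr, quadratic, quadratic, lowerTerm_apply, lowerTerm_apply, mul_add, add_mul,
    hH.mul_mulTensor_VG, hH.mulTensor_VG_mul, ← hH.map_mul, ← hH.map_mul, ← sub_eq_zero] at assoc
  rw [← assoc]
  simp only [map_add, map_sub]
  abel

include hR in
lemma overlap_of_isPBW (x₁ : R ⊗[k] V) (x₂ : V ⊗[k] R)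
    (hx : inclRV k V R x₁ = inclVR k V R x₂) :
    ∃ y, inclRG k G V R y = Theta k G V R ρ α x₁ x₂ ∧
      αext k G V R α y + ambiguityVG ρ lam α β x₁ x₂ = 0 ∧
      βext k G V R β y + lam (TensorProduct.map β .id x₁) = 0 := by
  refine exists_of_quadratic_eq_zero (hR := hR) hK hp ?_
  have quadratic : (vH ρ lam α β ⊙ vH ρ lam α β) ∘ₗ R.subtype
      = lowerTerm (gH ρ lam α β) (vH ρ lam α β) α β := sub_eq_zero.mp (relator_gH_vH ρ lam α β)
  rw [← add_assoc, ← (isTwistedPair_gH_vH ρ lam α β).lowerTerm_mulTensor_sub, ← quadratic,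
    quadratic_mulTensor, mulTensor_quadratic, LinearMap.comp_apply, LinearMap.comp_apply, hx,
    sub_self]

lemma PBWConditions.of_isPBW : PBWConditions ρ hR lam α β where
  lam_mul := lam_mul_of_isPBW (hR := hR) hK hp
  mul_β g r := sub_eq_zero.mp (mul_relator_of_isPBW hK hp g r).2
  mul_α g r := sub_eq_zero.mp (mul_relator_of_isPBW hK hp g r).1
  overlap := overlap_of_isPBW (hR := hR) hK hp

omit hp in
variable (ρ hR lam α β) in
theorem isPBW_iff_pbwConditions : IsPBW k G V R ρ lam α β ↔ PBWConditions ρ hR lam α β :=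
  ⟨.of_isPBW hK, fun hc ↦ hc.isPBW hK⟩

end Necessity

section SkewGroupAlgebra

variable {k G V : Type} [Field k] [Group G] [AddCommGroup V] [Module k V]

section Multiplication

variable (ρ : Representation k G V) (R : Submodule k (V ⊗[k] V))

lemma isTwistedPair_gA_vA : IsTwistedPair ρ 0 (gA k G V R ρ) (vA k G V R ρ) :=
  isTwistedPair_gH_vH ρ 0 0 0

lemma gA_mul_gA (x y : MonoidAlgebra k G) :
    gA k G V R ρ x * gA k G V R ρ y = gA k G V R ρ (x * y) :=
  ((isTwistedPair_gA_vA ρ R).map_mul x y).symm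

lemma gA_mul_embVGA (g : G) (s : V ⊗[k] MonoidAlgebra k G) :
    gA k G V R ρ (ofg k G g) * embVGA k G V R ρ s = embVGA k G V R ρ (leftAct ρ g s) := by
  have h := (isTwistedPair_gA_vA ρ R).mul_mulTensor_VG g s
  have hg : lamMk k G V (0 : MonoidAlgebra k G ⊗[k] V →ₗ[k] MonoidAlgebra k G) g = 0 := rfl
  rwa [hg, TensorProduct.map_zero_left, LinearMap.zero_apply, map_zero, map_zero, add_zero] at h

lemma embVGA_mul_gA (x : MonoidAlgebra k G) (s : V ⊗[k] MonoidAlgebra k G) :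
    embVGA k G V R ρ s * gA k G V R ρ x = embVGA k G V R ρ (rightAct x s) :=
  (isTwistedPair_gA_vA ρ R).mulTensor_VG_mul x s

lemma embGVA_eq : embGVA k G V R ρ = embVGA k G V R ρ ∘ₗ sigma k G V ρ := by
  have h := (isTwistedPair_gA_vA ρ R).mulTensor_swap
  rwa [LinearMap.comp_zero, add_zero] at h

lemma embVGVA_eq : embVGVA k G V R ρ
    = embVVGA k G V R ρ ∘ₗ TensorProduct.map .id (sigma k G V ρ)
      ∘ₗ (TensorProduct.assoc k V (MonoidAlgebra k G) V).toLinearMap := by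
  have h := (isTwistedPair_gA_vA ρ R).mulTensor_VG_mulTensor_V
  rwa [TensorProduct.map_zero_right, LinearMap.comp_zero, add_zero] at h

lemma embVVGA_Theta (α : R →ₗ[k] V ⊗[k] MonoidAlgebra k G) (x₁ : R ⊗[k] V) (x₂ : V ⊗[k] R) :
    embVVGA k G V R ρ (Theta k G V R ρ α x₁ x₂)
      = embVGVA k G V R ρ (TensorProduct.map α .id x₁)
        - embVVGA k G V R ρ (TensorProduct.map .id α x₂) := by
  rw [Theta, map_sub, embVGVA_eq]
  rfl

lemma embVVGA_inclRG (y : R ⊗[k] MonoidAlgebra k G) :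
    embVVGA k G V R ρ (inclRG k G V R y) = 0 := by
  have quadratic : (vA k G V R ρ ⊙ vA k G V R ρ) ∘ₗ R.subtype = 0 := by
    have h := relator_gH_vH ρ 0 (0 : R →ₗ[k] V ⊗[k] MonoidAlgebra k G) 0
    rw [relator, lowerTerm, LinearMap.comp_zero, LinearMap.comp_zero, add_zero] at h
    exact (sub_zero _).symm.trans h
  have h := quadratic_mulTensor_groupAlgebra (gA k G V R ρ) (vA k G V R ρ) (R := R)
  rw [quadratic, mulTensor, TensorProduct.map_zero_left, LinearMap.comp_zero] at h
  exact (LinearMap.congr_fun h y).symm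

lemma embVGA_correctionVG (lam : MonoidAlgebra k G ⊗[k] V →ₗ[k] MonoidAlgebra k G) (g : G)
    (t : V ⊗[k] V) : embVGA k G V R ρ (correctionVG ρ lam g t)
      = ((gA k G V R ρ ∘ₗ lamMk k G V lam g) ⊙ vA k G V R ρ) t
        + ((vA k G V R ρ ∘ₗ ρ g) ⊙ (gA k G V R ρ ∘ₗ lamMk k G V lam g)) t := by
  rw [mulTensor_comp_left, mulTensor_comp]
  change _ = embGVA k G V R ρ (TensorProduct.map (lamMk k G V lam g) .id t)
    + embVGA k G V R ρ (TensorProduct.map (ρ g) (lamMk k G V lam g) t)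
  rw [embGVA_eq, correctionVG, LinearMap.add_apply, map_add]
  rfl

end Multiplication

section SumOverGroup

variable [Fintype G] (lam : MonoidAlgebra k G ⊗[k] V →ₗ[k] MonoidAlgebra k G)

lemma sum_coeff_smul_lamMk (x : MonoidAlgebra k G) (w : V) :
    ∑ g : G, x.coeff g • lamMk k G V lam g w = lam (x ⊗ₜ w) := by
  conv_rhs => rw [← (MonoidAlgebra.basis G k).sum_repr x, TensorProduct.sum_tmul, map_sum]
  refine Finset.sum_congr rfl fun g _ ↦ ?_
  rw [← smul_tmul', map_smul]
  rfl

lemma sum_map_αComp_lamMk {R : Submodule k (V ⊗[k] V)} (α : R →ₗ[k] V ⊗[k] MonoidAlgebra k G) :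
    ∑ g : G, TensorProduct.map (αComp k G V R α g) (lamMk k G V lam g)
      = TensorProduct.map .id lam ∘ₗ (TensorProduct.assoc k V (MonoidAlgebra k G) V).toLinearMap
        ∘ₗ TensorProduct.map α .id := by
  refine TensorProduct.ext' fun r w ↦ ?_
  simp only [LinearMap.sum_apply, LinearMap.comp_apply, TensorProduct.map_tmul, αComp]
  induction α r using TensorProduct.induction_on with
  | zero => simp
  | add s t hs ht => simp only [map_add, add_tmul, Finset.sum_add_distrib, hs, ht]
  | tmul v x =>
    simp [TensorProduct.smul_tmul', TensorProduct.tmul_sum, ← sum_coeff_smul_lamMk]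

lemma sumAlphaLam_eq (ρ : Representation k G V) {R : Submodule k (V ⊗[k] V)}
    (α : R →ₗ[k] V ⊗[k] MonoidAlgebra k G) (x : R ⊗[k] V) : sumAlphaLam k G V R ρ lam α x
      = embVGA k G V R ρ (TensorProduct.map .id lam
        (TensorProduct.assoc k V (MonoidAlgebra k G) V (TensorProduct.map α .id x))) := by
  refine .trans ?_ (congrArg (embVGA k G V R ρ)
    (LinearMap.congr_fun (sum_map_αComp_lamMk lam α) x))
  simp [sumAlphaLam]

end SumOverGroup

section Faithful

variable [Finite G] [FiniteDimensional k V] {ρ : Representation k G V}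
  {R : Submodule k (V ⊗[k] V)} {hR : ∀ (g : G), ∀ x ∈ R, TensorProduct.map (ρ g) (ρ g) x ∈ R}
  (hK : IsKoszul k V R)
include hR hK

lemma gA_injective : Function.Injective (gA k G V R ρ) := by
  refine (injective_iff_map_eq_zero _).mpr fun x hx ↦ ?_
  exact (eq_zero_of_linear_eq_zero (hR := hR) (lam := 0) (α := 0) (β := 0) hK (fun _ ↦ rfl)
    (s := 0) (by rw [map_zero, zero_add]; exact hx)).2

lemma embVGA_injective : Function.Injective (embVGA k G V R ρ) := by
  refine (injective_iff_map_eq_zero _).mpr fun s hs ↦ ?_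
  exact (eq_zero_of_linear_eq_zero (hR := hR) (lam := 0) (α := 0) (β := 0) hK (fun _ ↦ rfl)
    (x := 0) (by rw [map_zero, add_zero]; exact hs)).1

lemma embVVGA_eq_zero_iff {t : V ⊗[k] (V ⊗[k] MonoidAlgebra k G)} :
    embVVGA k G V R ρ t = 0 ↔ ∃ y, inclRG k G V R y = t := by
  refine ⟨fun ht ↦ ?_, ?_⟩
  · obtain ⟨y, hy, -, -⟩ := exists_of_quadratic_eq_zero (hR := hR) (lam := 0) (α := 0) (β := 0) hK
      (fun _ ↦ rfl) (t := t) (s := 0) (x := 0)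
      (by rw [map_zero, map_zero, add_zero, add_zero]; exact ht)
    exact ⟨y, hy⟩
  · rintro ⟨y, rfl⟩
    exact embVVGA_inclRG ρ R y

end Faithful

section Conditions

variable [Finite G] [FiniteDimensional k V] {ρ : Representation k G V}
  {R : Submodule k (V ⊗[k] V)} {hR : ∀ (g : G), ∀ x ∈ R, TensorProduct.map (ρ g) (ρ g) x ∈ R}
  (hK : IsKoszul k V R)
include hR hK

lemma lam_mul_iff (lam : MonoidAlgebra k G ⊗[k] V →ₗ[k] MonoidAlgebra k G) (g h : G)
    (v : V) :
    gA k G V R ρ (ofg k G g) * gA k G V R ρ (lamMk k G V lam h v)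
        - gA k G V R ρ (lam ((ofg k G g * ofg k G h) ⊗ₜ[k] v))
        + gA k G V R ρ (lamMk k G V lam g (ρ h v)) * gA k G V R ρ (ofg k G h) = 0
      ↔ lam ((ofg k G g * ofg k G h) ⊗ₜ v) = ofg k G g * lam (ofg k G h ⊗ₜ v)
        + lam (ofg k G g ⊗ₜ ρ h v) * ofg k G h := by
  rw [gA_mul_gA, gA_mul_gA, ← map_sub, ← map_add,
    (injective_iff_map_eq_zero' _).mp (gA_injective (hR := hR) hK), sub_add_eq_add_sub, sub_eq_zero]
  exact eq_comm

lemma mul_β_iff (lam : MonoidAlgebra k G ⊗[k] V →ₗ[k] MonoidAlgebra k G)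
    (α : R →ₗ[k] V ⊗[k] MonoidAlgebra k G) (β : R →ₗ[k] MonoidAlgebra k G) (g : G) (r : R) :
    gA k G V R ρ (lam (TensorProduct.map (lamMk k G V lam g) .id (r : V ⊗[k] V)))
        - gA k G V R ρ (LinearMap.mul' k _ (TensorProduct.map (lamMk k G V lam g) .id (α r)))
        = gA k G V R ρ (ofg k G g) * gA k G V R ρ (β r)
          - gA k G V R ρ (β (rActR k G V R ρ hR g r)) * gA k G V R ρ (ofg k G g)
      ↔ ofg k G g * β r + LinearMap.mul' k _ (TensorProduct.map (lamMk k G V lam g) .id (α r))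
        = β (rActR k G V R ρ hR g r) * ofg k G g + correctionG lam g r := by
  rw [gA_mul_gA, gA_mul_gA, ← map_sub, ← map_sub, (gA_injective (hR := hR) hK).eq_iff,
    sub_eq_sub_iff_add_eq_add, add_comm]
  exact eq_comm

lemma mul_α_iff (lam : MonoidAlgebra k G ⊗[k] V →ₗ[k] MonoidAlgebra k G)
    (α : R →ₗ[k] V ⊗[k] MonoidAlgebra k G) (g : G) (r : R) :
    gA k G V R ρ (ofg k G g) * embVGA k G V R ρ (α r)
        - embVGA k G V R ρ (α (rActR k G V R ρ hR g r)) * gA k G V R ρ (ofg k G g)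
        = ((gA k G V R ρ ∘ₗ lamMk k G V lam g) ⊙ vA k G V R ρ) r
          + ((vA k G V R ρ ∘ₗ ρ g) ⊙ (gA k G V R ρ ∘ₗ lamMk k G V lam g)) r
      ↔ leftAct ρ g (α r)
        = rightAct (ofg k G g) (α (rActR k G V R ρ hR g r)) + correctionVG ρ lam g r := by
  rw [← embVGA_correctionVG, gA_mul_embVGA, embVGA_mul_gA, ← map_sub,
    (embVGA_injective (hR := hR) hK).eq_iff, sub_eq_iff_eq_add']

lemma overlap_G_iff (lam : MonoidAlgebra k G ⊗[k] V →ₗ[k] MonoidAlgebra k G)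
    (β : R →ₗ[k] MonoidAlgebra k G) (x₁ : R ⊗[k] V) (y : R ⊗[k] MonoidAlgebra k G) :
    gA k G V R ρ (βext k G V R β y) = -gA k G V R ρ (lam (TensorProduct.map β .id x₁))
      ↔ βext k G V R β y + lam (TensorProduct.map β .id x₁) = 0 := by
  rw [← map_neg, (gA_injective (hR := hR) hK).eq_iff, eq_neg_iff_add_eq_zero]

lemma overlap_VVG_iff (α : R →ₗ[k] V ⊗[k] MonoidAlgebra k G)
    (x₁ : R ⊗[k] V) (x₂ : V ⊗[k] R) :
    embVGVA k G V R ρ (TensorProduct.map α .id x₁) = embVVGA k G V R ρ (TensorProduct.map .id α x₂)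
      ↔ ∃ y, inclRG k G V R y = Theta k G V R ρ α x₁ x₂ := by
  rw [← sub_eq_zero, ← embVVGA_Theta, embVVGA_eq_zero_iff (hR := hR) hK]

omit [Finite G] in
lemma overlap_VG_iff [Fintype G] (lam : MonoidAlgebra k G ⊗[k] V →ₗ[k] MonoidAlgebra k G)
    (α : R →ₗ[k] V ⊗[k] MonoidAlgebra k G) (β : R →ₗ[k] MonoidAlgebra k G)
    (x₁ : R ⊗[k] V) (x₂ : V ⊗[k] R) (y : R ⊗[k] MonoidAlgebra k G) :
    embVGA k G V R ρ (αext k G V R α y) + sumAlphaLam k G V R ρ lam α x₁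
        = embVGA k G V R ρ (TensorProduct.map .id β x₂)
          - embGVA k G V R ρ (TensorProduct.map β .id x₁)
      ↔ αext k G V R α y + ambiguityVG ρ lam α β x₁ x₂ = 0 := by
  rw [sumAlphaLam_eq, embGVA_eq, LinearMap.comp_apply, ← map_add, ← map_sub,
    (embVGA_injective (hR := hR) hK).eq_iff, eq_sub_iff_add_eq, ← sub_eq_zero, ambiguityVG]
  simp only [add_assoc, add_sub_assoc]

end Conditions

lemma PBWConditions.overlap_of_eq {ρ : Representation k G V} {R : Submodule k (V ⊗[k] V)}
    {hR : ∀ (g : G), ∀ x ∈ R, TensorProduct.map (ρ g) (ρ g) x ∈ R}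
    {lam : MonoidAlgebra k G ⊗[k] V →ₗ[k] MonoidAlgebra k G}
    {α : R →ₗ[k] V ⊗[k] MonoidAlgebra k G} {β : R →ₗ[k] MonoidAlgebra k G}
    (hc : PBWConditions ρ hR lam α β) {x₁ : R ⊗[k] V} {x₂ : V ⊗[k] R}
    (hx : inclRV k V R x₁ = inclVR k V R x₂) {y : R ⊗[k] MonoidAlgebra k G}
    (hy : inclRG k G V R y = Theta k G V R ρ α x₁ x₂) :
    αext k G V R α y + ambiguityVG ρ lam α β x₁ x₂ = 0
      ∧ βext k G V R β y + lam (TensorProduct.map β .id x₁) = 0 := by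
  obtain ⟨z, hz, hVG, hG⟩ := hc.overlap x₁ x₂ hx
  obtain rfl : y = z := inclRG_injective R (hy.trans hz.symm)
  exact ⟨hVG, hG⟩

end SkewGroupAlgebra

end DeformKoszul

theorem pbw_deformation_of_koszul_skew_group_algebra_general
    (k G V : Type) [Field k] [Group G] [Fintype G] [AddCommGroup V] [Module k V]
    [FiniteDimensional k V]
    (ρ : Representation k G V) (R : Submodule k (V ⊗[k] V))
    (hR : ∀ (g : G), ∀ x ∈ R, TensorProduct.map (ρ g) (ρ g) x ∈ R)
    (hKoszul : IsKoszul k V R)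
    (lam : MonoidAlgebra k G ⊗[k] V →ₗ[k] MonoidAlgebra k G)
    (α : R →ₗ[k] (V ⊗[k] MonoidAlgebra k G))
    (β : R →ₗ[k] MonoidAlgebra k G) :
    IsPBW k G V R ρ lam α β ↔
      ((∀ (g h : G) (v : V),
        gA k G V R ρ (ofg k G g) * gA k G V R ρ (lamMk k G V lam h v)
          - gA k G V R ρ (lam ((ofg k G g * ofg k G h) ⊗ₜ[k] v))
          + gA k G V R ρ (lamMk k G V lam g (ρ h v)) * gA k G V R ρ (ofg k G h) = 0) ∧
      (∀ (g : G) (r : R),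
        gA k G V R ρ (lam (TensorProduct.map (lamMk k G V lam g) LinearMap.id (r : V ⊗[k] V)))
          - gA k G V R ρ ((LinearMap.mul' k (MonoidAlgebra k G))
              (TensorProduct.map (lamMk k G V lam g) LinearMap.id (α r)))
        = gA k G V R ρ (ofg k G g) * gA k G V R ρ (β r)
          - gA k G V R ρ (β (rActR k G V R ρ hR g r)) * gA k G V R ρ (ofg k G g)) ∧
      (∀ (g : G) (r : R),
        gA k G V R ρ (ofg k G g) * embVGA k G V R ρ (α r)
          - embVGA k G V R ρ (α (rActR k G V R ρ hR g r)) * gA k G V R ρ (ofg k G g)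
        = (LinearMap.mul' k (SkewA k G V R ρ))
            (TensorProduct.map ((gA k G V R ρ).comp (lamMk k G V lam g)) (vA k G V R ρ)
              (r : V ⊗[k] V))
          + (LinearMap.mul' k (SkewA k G V R ρ))
            (TensorProduct.map ((vA k G V R ρ).comp (ρ g)) ((gA k G V R ρ).comp (lamMk k G V lam g))
              (r : V ⊗[k] V))) ∧
      (∀ (x₁ : (R : Submodule k (V ⊗[k] V)) ⊗[k] V) (x₂ : V ⊗[k] (R : Submodule k (V ⊗[k] V))),
        inclRV k V R x₁ = inclVR k V R x₂ →
        ∀ y : (R : Submodule k (V ⊗[k] V)) ⊗[k] MonoidAlgebra k G,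
          inclRG k G V R y = Theta k G V R ρ α x₁ x₂ →
          embVGA k G V R ρ (αext k G V R α y) + sumAlphaLam k G V R ρ lam α x₁
            = embVGA k G V R ρ ((TensorProduct.map LinearMap.id β) x₂)
              - embGVA k G V R ρ ((TensorProduct.map β LinearMap.id) x₁)) ∧
      (∀ (x₁ : (R : Submodule k (V ⊗[k] V)) ⊗[k] V) (x₂ : V ⊗[k] (R : Submodule k (V ⊗[k] V))),
        inclRV k V R x₁ = inclVR k V R x₂ →
        ∀ y : (R : Submodule k (V ⊗[k] V)) ⊗[k] MonoidAlgebra k G,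
          inclRG k G V R y = Theta k G V R ρ α x₁ x₂ →
          gA k G V R ρ (βext k G V R β y)
            = - gA k G V R ρ (lam ((TensorProduct.map β LinearMap.id) x₁))) ∧
      (∀ (x₁ : (R : Submodule k (V ⊗[k] V)) ⊗[k] V) (x₂ : V ⊗[k] (R : Submodule k (V ⊗[k] V))),
        inclRV k V R x₁ = inclVR k V R x₂ →
          embVGVA k G V R ρ ((TensorProduct.map α LinearMap.id) x₁)
            = embVVGA k G V R ρ ((TensorProduct.map LinearMap.id α) x₂))) := by
  rw [isPBW_iff_pbwConditions ρ hR lam α β hKoszul]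
  constructor
  · intro hc
    refine ⟨fun g h v ↦ (lam_mul_iff (hR := hR) hKoszul lam g h v).mpr (hc.lam_mul g h v),
      fun g r ↦ (mul_β_iff hKoszul lam α β g r).mpr (hc.mul_β g r),
      fun g r ↦ (mul_α_iff hKoszul lam α g r).mpr (hc.mul_α g r),
      fun x₁ x₂ hx y hy ↦ (overlap_VG_iff (hR := hR) hKoszul lam α β x₁ x₂ y).mpr
        (hc.overlap_of_eq hx hy).1,
      fun x₁ x₂ hx y hy ↦ (overlap_G_iff (hR := hR) hKoszul lam β x₁ y).mpr
        (hc.overlap_of_eq hx hy).2,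
      fun x₁ x₂ hx ↦ (overlap_VVG_iff (hR := hR) hKoszul α x₁ x₂).mpr
        ((hc.overlap x₁ x₂ hx).imp fun _ ↦ And.left)⟩
  · rintro ⟨h₁, h₂, h₃, h₄, h₅, h₆⟩
    refine ⟨fun g h v ↦ (lam_mul_iff (hR := hR) hKoszul lam g h v).mp (h₁ g h v),
      fun g r ↦ (mul_β_iff hKoszul lam α β g r).mp (h₂ g r),
      fun g r ↦ (mul_α_iff hKoszul lam α g r).mp (h₃ g r), fun x₁ x₂ hx ↦ ?_⟩
    obtain ⟨y, hy⟩ := (overlap_VVG_iff (hR := hR) hKoszul α x₁ x₂).mp (h₆ x₁ x₂ hx)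
    exact ⟨y, hy, (overlap_VG_iff (hR := hR) hKoszul lam α β x₁ x₂ y).mp (h₄ x₁ x₂ hx y hy),
      (overlap_G_iff (hR := hR) hKoszul lam β x₁ y).mp (h₅ x₁ x₂ hx y hy)⟩

/-- **Theorem 2.2 (main theorem)** of Shepler–Witherspoon, "Deforming group actions on
Koszul algebras".  Let `G` be a finite group, `V` a finite dimensional `kG`-module and
`S = T(V)/(R)` a Koszul algebra with `R ⊆ V ⊗ V` closed under the `G`-action.  A
filtered algebra `H` is a PBW deformation of `S ⋊ G` iff `H ≅ H_{λ,α,β}` for parameters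
`α : R → V ⊗ kG`, `β : R → kG`, `λ : kG ⊗ V → kG` satisfying conditions (1)–(6); every
such filtered algebra is presented by parameters (Section 2 of the paper), so the
theorem is stated as:  for every choice of parameters, `H_{λ,α,β}` is a PBW deformation
of `S ⋊ G` iff conditions (1)–(6) hold upon projection of the images of the maps to
`S ⋊ G`.  In (4)–(6), an element `x ∈ (V ⊗ R) ∩ (R ⊗ V) ⊆ V ⊗ V ⊗ V` is encoded by its
two presentations `x₁ ∈ R ⊗ V`, `x₂ ∈ V ⊗ R`, and (6) guarantees that the element
`((1 ⊗ σ)(α ⊗ 1) − 1 ⊗ α)(x)` appearing in (4) and (5) lies in `R ⊗ kG`, encoded by the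
(necessarily unique) `y` with `inclRG y = Theta x₁ x₂`. -/
theorem pbw_deformation_of_koszul_skew_group_algebra
    (k G V : Type) [Field k] [Group G] [Fintype G] [AddCommGroup V] [Module k V]
    [FiniteDimensional k V] (h2 : (2 : k) ≠ 0)
    (ρ : Representation k G V) (R : Submodule k (V ⊗[k] V))
    (hR : ∀ (g : G), ∀ x ∈ R, TensorProduct.map (ρ g) (ρ g) x ∈ R)
    (hKoszul : IsKoszul k V R)
    (lam : MonoidAlgebra k G ⊗[k] V →ₗ[k] MonoidAlgebra k G)
    (α : R →ₗ[k] (V ⊗[k] MonoidAlgebra k G))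
    (β : R →ₗ[k] MonoidAlgebra k G) :
    IsPBW k G V R ρ lam α β ↔
      -- (1)  1⊗λ − λ(m⊗1) + (λ⊗1)(1⊗σ) = 0  on kG ⊗ kG ⊗ V
      ((∀ (g h : G) (v : V),
        gA k G V R ρ (ofg k G g) * gA k G V R ρ (lamMk k G V lam h v)
          - gA k G V R ρ (lam ((ofg k G g * ofg k G h) ⊗ₜ[k] v))
          + gA k G V R ρ (lamMk k G V lam g (ρ h v)) * gA k G V R ρ (ofg k G h) = 0) ∧
      -- (2)  λ(λ⊗1) − λ(1⊗α) = 1⊗β − (β⊗1)(1⊗σ)(σ⊗1)  on kG ⊗ R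
      (∀ (g : G) (r : R),
        gA k G V R ρ (lam (TensorProduct.map (lamMk k G V lam g) LinearMap.id (r : V ⊗[k] V)))
          - gA k G V R ρ ((LinearMap.mul' k (MonoidAlgebra k G))
              (TensorProduct.map (lamMk k G V lam g) LinearMap.id (α r)))
        = gA k G V R ρ (ofg k G g) * gA k G V R ρ (β r)
          - gA k G V R ρ (β (rActR k G V R ρ hR g r)) * gA k G V R ρ (ofg k G g)) ∧
      -- (3)  1⊗α − (α⊗1)(1⊗σ)(σ⊗1) = λ⊗1 + (1⊗λ)(σ⊗1)  on kG ⊗ R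
      (∀ (g : G) (r : R),
        gA k G V R ρ (ofg k G g) * embVGA k G V R ρ (α r)
          - embVGA k G V R ρ (α (rActR k G V R ρ hR g r)) * gA k G V R ρ (ofg k G g)
        = (LinearMap.mul' k (SkewA k G V R ρ))
            (TensorProduct.map ((gA k G V R ρ).comp (lamMk k G V lam g)) (vA k G V R ρ)
              (r : V ⊗[k] V))
          + (LinearMap.mul' k (SkewA k G V R ρ))
            (TensorProduct.map ((vA k G V R ρ).comp (ρ g)) ((gA k G V R ρ).comp (lamMk k G V lam g))
              (r : V ⊗[k] V))) ∧
      -- (4)  α((1⊗σ)(α⊗1) − 1⊗α) + Σ_g α_g ⊗ λ(g⊗−) = 1⊗β − β⊗1  on (V⊗R) ∩ (R⊗V)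
      (∀ (x₁ : (R : Submodule k (V ⊗[k] V)) ⊗[k] V) (x₂ : V ⊗[k] (R : Submodule k (V ⊗[k] V))),
        inclRV k V R x₁ = inclVR k V R x₂ →
        ∀ y : (R : Submodule k (V ⊗[k] V)) ⊗[k] MonoidAlgebra k G,
          inclRG k G V R y = Theta k G V R ρ α x₁ x₂ →
          embVGA k G V R ρ (αext k G V R α y) + sumAlphaLam k G V R ρ lam α x₁
            = embVGA k G V R ρ ((TensorProduct.map LinearMap.id β) x₂)
              - embGVA k G V R ρ ((TensorProduct.map β LinearMap.id) x₁)) ∧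
      -- (5)  β((1⊗σ)(α⊗1) − 1⊗α) = −λ(β⊗1)  on (V⊗R) ∩ (R⊗V)
      (∀ (x₁ : (R : Submodule k (V ⊗[k] V)) ⊗[k] V) (x₂ : V ⊗[k] (R : Submodule k (V ⊗[k] V))),
        inclRV k V R x₁ = inclVR k V R x₂ →
        ∀ y : (R : Submodule k (V ⊗[k] V)) ⊗[k] MonoidAlgebra k G,
          inclRG k G V R y = Theta k G V R ρ α x₁ x₂ →
          gA k G V R ρ (βext k G V R β y)
            = - gA k G V R ρ (lam ((TensorProduct.map β LinearMap.id) x₁))) ∧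
      -- (6)  α⊗1 − 1⊗α = 0  on (V⊗R) ∩ (R⊗V)
      (∀ (x₁ : (R : Submodule k (V ⊗[k] V)) ⊗[k] V) (x₂ : V ⊗[k] (R : Submodule k (V ⊗[k] V))),
        inclRV k V R x₁ = inclVR k V R x₂ →
          embVGVA k G V R ρ ((TensorProduct.map α LinearMap.id) x₁)
            = embVVGA k G V R ρ ((TensorProduct.map LinearMap.id α) x₂))) :=
  pbw_deformation_of_koszul_skew_group_algebra_general k G V ρ R hR hKoszul lam α β
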